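/- arXiv:2509.22743 — 2 statements merged into one kernel-verified Lean document; each statement's English description precedes it below -/
import Mathlib

section
/- Let n ≥ 2 and let φ : ⟨RS_n⟩ → ⟨RS_n⟩ be an ℝ-linear map. Then φ(A) and A have the same characteristic polynomial for every A ∈ ⟨RS_n⟩ if and only if: when n = 2, there exists P ∈ {I₂, diag(1, −1)} such that φ(A)_DS = P A_DS P⁻¹ for all A ∈ ⟨RS_2⟩; and when n ≥ 3, there exists an invertible matrix P ∈ ⟨DS_n⟩ such that either φ(A)_DS = P A_DS P⁻¹ for all A ∈ ⟨RS_n⟩, or φ(A)_DS = P (A_DS)ᵀ P⁻¹ for all A ∈ ⟨RS_n⟩. -/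
/-!
Write `z = avg n` for the orthogonal projection onto the line of constant vectors and `f = 1 - z`.
Then `⟨RS_n⟩ = {A : z A z = A z}` consists of block upper triangular matrices for the splitting
`ℝⁿ = ℝ e ⊕ e^⊥`, `⟨DS_n⟩` is the commutant of `z`, that is, the block diagonal matrices
`ℝ z ⊕ f M_n(ℝ) f`, and `A_DS = z A z + f A f` is the block diagonal part. Hence `A_DS` and `A` have
the same characteristic polynomial for `A ∈ ⟨RS_n⟩` (`charpoly_partDS`), and a conjugation (possibly
after transposition) on block diagonal parts preserves characteristic polynomials.

Conversely let `φ` preserve characteristic polynomials and put `ψ(A) = φ(A)_DS`. The characteristic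
polynomial determines the traces of all powers (`trace_pow_eq`). Polarising `tr ψ(A)² = tr A²` gives
`tr (ψ(A) ψ(B)) = tr (A B)`; since the trace form is nondegenerate on `⟨DS_n⟩`, the map `ψ` kills
`A - A_DS` (`partDS_map_partDS`) and is bijective on `⟨DS_n⟩` (`Pres.surjOn`). Polarising
`tr ψ(A)³ = tr A³` gives `tr (ψ(A)² ψ(B)) = tr (A² B) = tr (ψ(A²) ψ(B))`, so `ψ(A²) = ψ(A)²`: `ψ` is a
Jordan automorphism of `⟨DS_n⟩` (`Pres.map_sq`).

The image `ψ(z)` is a central idempotent of trace one, so it is `z`, or `n = 2` and it is `f`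
(`Pres.map_avg`). For `n = 2` the algebra is spanned by `1` and `z`, and the two cases are
conjugation by `1` and by `diag(1, -1)`. For `n ≥ 3`, Herstein's identity
`α ψ(X) β + β ψ(X) α = 0`, with `α = ψ(AB) - ψ(A)ψ(B)` and `β = ψ(AB) - ψ(B)ψ(A)`, shows by primeness of
the full matrix algebra that `ψ` is multiplicative or antimultiplicative (`Pres.hom_or_antihom`),
and a Skolem–Noether argument (`exists_conj`) makes it inner, after a transposition in the second
case.
-/

open Matrix

/-- Membership in `⟨DS_n⟩`: `∃ c, A e = c e ∧ Aᵀ e = c e`, where `e` is the all-ones vector. -/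
def InSpanDS {n : ℕ} (A : Matrix (Fin n) (Fin n) ℝ) : Prop :=
  ∃ c : ℝ, A *ᵥ (fun _ => (1:ℝ)) = c • (fun _ => (1:ℝ)) ∧
    Aᵀ *ᵥ (fun _ => (1:ℝ)) = c • (fun _ => (1:ℝ))

/-- Membership in `⟨RS_n⟩`: `∃ c, A e = c e`. -/
def InSpanRS {n : ℕ} (A : Matrix (Fin n) (Fin n) ℝ) : Prop :=
  ∃ c : ℝ, A *ᵥ (fun _ => (1:ℝ)) = c • (fun _ => (1:ℝ))

/-- Membership in `R_n = {e vᵀ : vᵀ e = 0}`. -/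
def InRn {n : ℕ} (A : Matrix (Fin n) (Fin n) ℝ) : Prop :=
  ∃ v : Fin n → ℝ, (∑ i, v i) = 0 ∧ A = vecMulVec (fun _ => (1:ℝ)) v

/-- Membership in `C_n = {v eᵀ : vᵀ e = 0}`. -/
def InCn {n : ℕ} (A : Matrix (Fin n) (Fin n) ℝ) : Prop :=
  ∃ v : Fin n → ℝ, (∑ i, v i) = 0 ∧ A = vecMulVec v (fun _ => (1:ℝ))

/-- `A` is doubly stochastic. -/
def IsDS {n : ℕ} (A : Matrix (Fin n) (Fin n) ℝ) : Prop :=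
  (∀ i j, 0 ≤ A i j) ∧ (∀ i, ∑ j, A i j = 1) ∧ (∀ j, ∑ i, A i j = 1)

/-- `A` is row stochastic. -/
def IsRS {n : ℕ} (A : Matrix (Fin n) (Fin n) ℝ) : Prop :=
  (∀ i j, 0 ≤ A i j) ∧ (∀ i, ∑ j, A i j = 1)

/-- `A` is column stochastic. -/
def IsCS {n : ℕ} (A : Matrix (Fin n) (Fin n) ℝ) : Prop :=
  (∀ i j, 0 ≤ A i j) ∧ (∀ j, ∑ i, A i j = 1)

/-- `A` is a permutation matrix. -/
def IsPerm {n : ℕ} (A : Matrix (Fin n) (Fin n) ℝ) : Prop :=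
  ∃ σ : Equiv.Perm (Fin n), A = σ.permMatrix ℝ

/-- `s_A = (Σ_{i,j} a_{ij})/n²`. -/
noncomputable def sAvg {n : ℕ} (A : Matrix (Fin n) (Fin n) ℝ) : ℝ :=
  (∑ i, ∑ j, A i j) / (n ^ 2 : ℝ)

/-- `r(A)` with `i`-th entry `(Σ_k a_{ki})/n − s_A`. -/
noncomputable def rVec {n : ℕ} (A : Matrix (Fin n) (Fin n) ℝ) : Fin n → ℝ :=
  fun i => (∑ k, A k i) / (n : ℝ) - sAvg A

/-- `c(A)` with `i`-th entry `(Σ_k a_{ik})/n − s_A`. -/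
noncomputable def cVec {n : ℕ} (A : Matrix (Fin n) (Fin n) ℝ) : Fin n → ℝ :=
  fun i => (∑ k, A i k) / (n : ℝ) - sAvg A

/-- `A_R = e · r(A)ᵀ`. -/
noncomputable def partR {n : ℕ} (A : Matrix (Fin n) (Fin n) ℝ) : Matrix (Fin n) (Fin n) ℝ :=
  vecMulVec (fun _ => (1:ℝ)) (rVec A)

/-- `A_C = c(A) · eᵀ`. -/
noncomputable def partC {n : ℕ} (A : Matrix (Fin n) (Fin n) ℝ) : Matrix (Fin n) (Fin n) ℝ :=
  vecMulVec (cVec A) (fun _ => (1:ℝ))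

/-- `A_DS = A − A_R − A_C`. -/
noncomputable def partDS {n : ℕ} (A : Matrix (Fin n) (Fin n) ℝ) : Matrix (Fin n) (Fin n) ℝ :=
  A - partR A - partC A

/-! ### The block decomposition along the all-ones vector -/

/-- The orthogonal projection `e eᵀ / n` onto the line spanned by the all-ones vector. -/
noncomputable def avg (n : ℕ) : Matrix (Fin n) (Fin n) ℝ := of fun _ _ => (n : ℝ)⁻¹

lemma avg_mul {n : ℕ} (A : Matrix (Fin n) (Fin n) ℝ) (i j : Fin n) :
    (avg n * A) i j = (n : ℝ)⁻¹ * ∑ k, A k j := by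
  simp [avg, Matrix.mul_apply, Finset.mul_sum]

lemma mul_avg {n : ℕ} (A : Matrix (Fin n) (Fin n) ℝ) (i j : Fin n) :
    (A * avg n) i j = (n : ℝ)⁻¹ * ∑ k, A i k := by
  simp [avg, Matrix.mul_apply, ← Finset.sum_mul, mul_comm]

lemma avg_mul_mul_avg {n : ℕ} (A : Matrix (Fin n) (Fin n) ℝ) :
    ∃ c : ℝ, avg n * A * avg n = c • avg n := by
  refine ⟨∑ k, (avg n * A) k k, ?_⟩
  ext i j
  rw [mul_avg]
  simp only [avg_mul, Matrix.smul_apply, smul_eq_mul]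
  simp [avg, mul_comm]

lemma avg_mul_avg {n : ℕ} (hn : 2 ≤ n) : avg n * avg n = avg n := by
  have : (n : ℝ) ≠ 0 := by positivity
  ext i j
  rw [mul_avg]
  simp [avg, this]

lemma avg_transpose (n : ℕ) : (avg n)ᵀ = avg n := rfl

lemma trace_avg {n : ℕ} (hn : 2 ≤ n) : (avg n).trace = 1 := by
  have : (n : ℝ) ≠ 0 := by positivity
  simp [avg, Matrix.trace, this]

lemma partDS_eq {n : ℕ} (A : Matrix (Fin n) (Fin n) ℝ) :
    partDS A = avg n * A * avg n + (1 - avg n) * A * (1 - avg n) := by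
  have h : partDS A = A - (avg n * A - avg n * A * avg n) - (A * avg n - avg n * A * avg n) := by
    have hs : ∀ i j, (avg n * A * avg n) i j = sAvg A := by
      intro i j
      rw [mul_avg]
      simp only [avg_mul, sAvg, ← Finset.mul_sum]
      rw [Finset.sum_comm]
      ring
    ext i j
    simp only [partDS, partR, partC, Matrix.sub_apply, hs, avg_mul, mul_avg, vecMulVec_apply,
      rVec, cVec]
    ring
  rw [h]
  noncomm_ring

lemma inSpanRS_iff {n : ℕ} (hn : 2 ≤ n) (A : Matrix (Fin n) (Fin n) ℝ) :
    InSpanRS A ↔ avg n * A * avg n = A * avg n := by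
  have h0 : (n : ℝ) ≠ 0 := by positivity
  constructor
  · rintro ⟨c, hc⟩
    have h1 : A * avg n = c • avg n := by
      ext i j
      rw [mul_avg]
      have := congrFun hc i
      simp [mulVec, dotProduct] at this
      simp [this, avg, mul_comm]
    rw [mul_assoc, h1, mul_smul_comm, avg_mul_avg hn]
  · intro h
    obtain ⟨c, hc⟩ := avg_mul_mul_avg A
    rw [h] at hc
    refine ⟨c, ?_⟩
    ext i
    have := congrFun (congrFun hc i) i
    rw [mul_avg] at this
    simp only [mulVec, dotProduct, Pi.smul_apply, smul_eq_mul, mul_one]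
    simp [avg] at this
    field_simp at this
    linarith

lemma inSpanDS_of_commute {n : ℕ} (hn : 2 ≤ n) {A : Matrix (Fin n) (Fin n) ℝ}
    (h : avg n * A = A * avg n) : InSpanDS A := by
  have h0 : (n : ℝ) ≠ 0 := by positivity
  obtain ⟨c, hc⟩ := avg_mul_mul_avg A
  have h1 : A * avg n = c • avg n := by rw [← hc, h, mul_assoc, avg_mul_avg hn]
  refine ⟨c, ?_, ?_⟩
  · ext i
    have := congrFun (congrFun h1 i) i
    rw [mul_avg] at this
    simp only [mulVec, dotProduct, Pi.smul_apply, smul_eq_mul, mul_one]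
    simp [avg] at this
    field_simp at this
    linarith
  · ext i
    have := congrFun (congrFun h1 i) i
    rw [← h, avg_mul] at this
    simp only [mulVec, dotProduct, Pi.smul_apply, smul_eq_mul, mul_one, transpose_apply]
    simp [avg] at this
    field_simp at this
    linarith

lemma inSpanRS_of_commute {n : ℕ} (hn : 2 ≤ n) {A : Matrix (Fin n) (Fin n) ℝ}
    (h : avg n * A = A * avg n) : InSpanRS A := by
  rw [inSpanRS_iff hn, h, mul_assoc, avg_mul_avg hn]

/-- The corner `f M_n(ℝ) f`, with `f = 1 - avg n`, is annihilated by `avg n`. -/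
lemma commute_block {n : ℕ} (hn : 2 ≤ n) (A : Matrix (Fin n) (Fin n) ℝ) :
    avg n * ((1 - avg n) * A * (1 - avg n)) = 0 ∧ ((1 - avg n) * A * (1 - avg n)) * avg n = 0 := by
  have hz := avg_mul_avg hn
  constructor
  · rw [← mul_assoc, ← mul_assoc, mul_sub (avg n) 1, hz]; simp
  · rw [mul_assoc, sub_mul 1 (avg n) (avg n), hz]; simp

lemma commute_partDS {n : ℕ} (hn : 2 ≤ n) (A : Matrix (Fin n) (Fin n) ℝ) :
    avg n * partDS A = partDS A * avg n := by
  have hz := avg_mul_avg hn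
  rw [partDS_eq, mul_add, add_mul, (commute_block hn A).1, (commute_block hn A).2]
  rw [mul_assoc _ (avg n) (avg n), hz, ← mul_assoc, ← mul_assoc, hz]

lemma partDS_of_commute {n : ℕ} (hn : 2 ≤ n) {A : Matrix (Fin n) (Fin n) ℝ}
    (h : avg n * A = A * avg n) : partDS A = A := by
  have hz := avg_mul_avg hn
  have h2 : avg n * A * avg n = A * avg n := by rw [h, mul_assoc, hz]
  have : (1 - avg n) * A * (1 - avg n) = A - avg n * A - (A * avg n - avg n * A * avg n) := by
    noncomm_ring
  rw [partDS_eq, this, h2, h]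
  abel

open Polynomial in
lemma charpoly_partDS {n : ℕ} (hn : 2 ≤ n) {A : Matrix (Fin n) (Fin n) ℝ} (hA : InSpanRS A) :
    (partDS A).charpoly = A.charpoly := by
  have hz := avg_mul_avg hn
  rw [inSpanRS_iff hn] at hA
  rw [partDS_eq]
  set z := avg n with hzd
  have hf : (1 - z) * (1 - z) = 1 - z := by
    rw [sub_mul, mul_sub z, hz]; simp
  have hzf : z * (1 - z) = 0 := by rw [mul_sub, hz]; simp
  have hfz : (1 - z) * z = 0 := by rw [sub_mul, hz]; simp
  refine Polynomial.funext fun t => ?_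
  rw [eval_charpoly, eval_charpoly]
  have hs : scalar (Fin n) t = t • (1 : Matrix (Fin n) (Fin n) ℝ) := by
    rw [smul_one_eq_diagonal]; rfl
  -- For block upper triangular `T = t - A` with blocks `T₁`, `T₂` and corner `-R`, one has
  -- `T = diag(1, T₂) * [[1, -R], [0, 1]] * diag(T₁, 1)`; dropping the unipotent factor gives the
  -- block diagonal part.
  have h1 : scalar (Fin n) t - (z * A * z + (1 - z) * A * (1 - z)) =
      (z + (1 - z) * (t • 1 - A) * (1 - z)) * ((1 - z) + z * (t • 1 - A) * z) := by
    rw [hs]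
    set f := 1 - z with hfd
    have h1 : (1 : Matrix (Fin n) (Fin n) ℝ) = z + f := by simp [hfd]
    have e : (z + f * (t • 1 - A) * f) * (f + z * (t • 1 - A) * z) =
      z * f + t • (z * z * z) - z * z * A * z + (t • (f * f * f) - f * A * (f * f)) +
        f * (t • 1 - A) * (f * z) * ((t • 1 - A) * z) := by
      simp only [mul_add, add_mul, mul_sub, sub_mul, mul_smul_comm, smul_mul_assoc, mul_one, one_mul,
        mul_assoc, smul_add, smul_sub]
      abel
    rw [e]
    simp only [hz, hf, hzf, hfz, zero_mul, mul_zero, zero_add, add_zero]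
    have h3 : t • (1 : Matrix (Fin n) (Fin n) ℝ) = t • z + t • f := by rw [← smul_add, ← h1]
    rw [h3]
    abel
  have h2 : scalar (Fin n) t - A =
      (z + (1 - z) * (t • 1 - A) * (1 - z)) * (1 - z * (A * (1 - z))) *
        ((1 - z) + z * (t • 1 - A) * z) := by
    have e : (z + (1 - z) * (t • 1 - A) * (1 - z)) * (1 - z * (A * (1 - z))) *
        ((1 - z) + z * (t • 1 - A) * z) = (z + (1 - z) * (t • 1 - A) * (1 - z)) * 
        ((1 - z) + z * (t • 1 - A) * z) - (z * z) * A * ((1 - z) * (1 - z))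
        - z * z * A * ((1 - z) * z) * ((t • 1 - A) * z)
        - (1 - z) * (t • 1 - A) * ((1 - z) * z) * (A * (1 - z)) * 
           ((1 - z) + z * (t • 1 - A) * z) := by
      set f := 1 - z with hfd
      set Y := t • 1 - A
      clear_value f Y
      noncomm_ring
    rw [e, ← h1, hf, hfz, hz]
    simp only [mul_zero, zero_mul, sub_zero]
    rw [hs, hA]
    have : (1 - z) * A * (1 - z) = A - z * A - (A * z - z * A * z) := by
      noncomm_ring
    rw [this, hA, mul_sub, hA]
    simp only [mul_one]
    abel
  have h3 : (1 - z * (A * (1 - z))).det = 1 := by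
    rw [det_one_sub_mul_comm, mul_assoc, hfz]; simp
  rw [h1, h2, det_mul, det_mul, det_mul, h3, mul_one]

/-! ### Traces of powers and the characteristic polynomial -/

open Polynomial in
/-- `det p(A)` depends only on the characteristic polynomial of `A`: split `p` into linear factors
`X - r` and use `det (r - A) = A.charpoly.eval r`. -/
lemma det_aeval_eq {m : Type*} [Fintype m] [DecidableEq m] {A B : Matrix m m ℂ}
    (h : A.charpoly = B.charpoly) (p : ℂ[X]) : (aeval A p).det = (aeval B p).det := by
  have key : ∀ s : Multiset ℂ, (aeval A (s.map (X - C ·)).prod).det =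
      (aeval B (s.map (X - C ·)).prod).det := by
    intro s
    induction s using Multiset.induction with
    | empty => simp
    | cons r s ih =>
      have hr : (aeval A (X - C r)).det = (aeval B (X - C r)).det := by
        have := congrArg (eval r) h
        rw [eval_charpoly, eval_charpoly] at this
        have e : ∀ A : Matrix m m ℂ, aeval A (X - C r) = -(scalar m r - A) := by
          intro A; simp [algebraMap_eq_diagonal, Pi.algebraMap_def]
        rw [e, e, det_neg, det_neg, this]
      rw [Multiset.map_cons, Multiset.prod_cons, map_mul, map_mul, det_mul, det_mul, hr, ih]
  rw [(IsAlgClosed.splits p).eq_prod_roots, map_mul, map_mul, det_mul, det_mul, key]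
  congr 1
  simp [algebraMap_eq_diagonal, Pi.algebraMap_def]

open Polynomial in
/-- Over `ℂ`, applying `det_aeval_eq` to `t - X ^ k` shows that `A ^ k` and `B ^ k` have the same
characteristic polynomial, hence the same trace. -/
lemma trace_pow_eq {m : Type*} [Fintype m] [DecidableEq m] {A B : Matrix m m ℝ}
    (h : A.charpoly = B.charpoly) (k : ℕ) : (A ^ k).trace = (B ^ k).trace := by
  have hc : ((A ^ k).map (algebraMap ℝ ℂ)).charpoly = ((B ^ k).map (algebraMap ℝ ℂ)).charpoly := by
    rw [Matrix.map_pow, Matrix.map_pow]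
    have h' : (A.map (algebraMap ℝ ℂ)).charpoly = (B.map (algebraMap ℝ ℂ)).charpoly := by
      rw [charpoly_map, charpoly_map, h]
    refine Polynomial.funext fun t => ?_
    rw [eval_charpoly, eval_charpoly]
    have := det_aeval_eq h' (C t - X ^ k)
    simpa [algebraMap_eq_diagonal, Pi.algebraMap_def] using this
  have := Matrix.trace_eq_neg_charpoly_nextCoeff ((A ^ k).map (algebraMap ℝ ℂ))
  rw [hc, ← Matrix.trace_eq_neg_charpoly_nextCoeff] at this
  have h2 : ∀ M : Matrix m m ℝ, (M.map (algebraMap ℝ ℂ)).trace = ((M.trace : ℝ) : ℂ) := by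
    intro M; simp [Matrix.trace]
  rw [h2, h2] at this
  exact_mod_cast this

/-! ### Jordan structure of a characteristic polynomial preserver -/

lemma commute_mul {n : ℕ} {A B : Matrix (Fin n) (Fin n) ℝ} (hA : avg n * A = A * avg n)
    (hB : avg n * B = B * avg n) : avg n * (A * B) = A * B * avg n := by
  rw [← mul_assoc, hA, mul_assoc, hB, mul_assoc]

lemma commute_add {n : ℕ} {A B : Matrix (Fin n) (Fin n) ℝ} (hA : avg n * A = A * avg n)
    (hB : avg n * B = B * avg n) : avg n * (A + B) = (A + B) * avg n := by
  rw [mul_add, add_mul, hA, hB]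

lemma commute_sub {n : ℕ} {A B : Matrix (Fin n) (Fin n) ℝ} (hA : avg n * A = A * avg n)
    (hB : avg n * B = B * avg n) : avg n * (A - B) = (A - B) * avg n := by
  rw [mul_sub, sub_mul, hA, hB]

lemma commute_transpose {n : ℕ} {A : Matrix (Fin n) (Fin n) ℝ} (hA : avg n * A = A * avg n) :
    avg n * Aᵀ = Aᵀ * avg n := by
  have := congrArg transpose hA
  rw [transpose_mul, transpose_mul, avg_transpose] at this
  exact this.symm

/-- The trace form is nondegenerate on the commutant of `avg n`, because this commutant is closed
under transposition. -/
lemma eq_zero_of_trace {n : ℕ} {X : Matrix (Fin n) (Fin n) ℝ} (hX : avg n * X = X * avg n)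
    (h : ∀ Y, avg n * Y = Y * avg n → (X * Y).trace = 0) : X = 0 := by
  have := h Xᵀ (commute_transpose hX)
  rw [← conjTranspose_eq_transpose_of_trivial] at this
  exact trace_mul_conjTranspose_self_eq_zero_iff.mp this

/-- `ψ` maps `⟨DS_n⟩`, described as the commutant of `avg n`, into itself and preserves
characteristic polynomials there. Nothing is required of `ψ` outside `⟨DS_n⟩`. -/
structure Pres (n : ℕ) (ψ : Matrix (Fin n) (Fin n) ℝ →ₗ[ℝ] Matrix (Fin n) (Fin n) ℝ) : Prop where
  maps : ∀ A, avg n * A = A * avg n → avg n * ψ A = ψ A * avg n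
  charpoly_eq : ∀ A, avg n * A = A * avg n → (ψ A).charpoly = A.charpoly

namespace Pres

variable {n : ℕ} {ψ : Matrix (Fin n) (Fin n) ℝ →ₗ[ℝ] Matrix (Fin n) (Fin n) ℝ}

lemma trace_eq (h : Pres n ψ) {A : Matrix (Fin n) (Fin n) ℝ} (hA : avg n * A = A * avg n) :
    (ψ A).trace = A.trace := by
  simpa using trace_pow_eq (h.charpoly_eq A hA) 1

lemma trace_mul (h : Pres n ψ) {A B : Matrix (Fin n) (Fin n) ℝ} (hA : avg n * A = A * avg n)
    (hB : avg n * B = B * avg n) : (ψ A * ψ B).trace = (A * B).trace := by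
  have h1 := trace_pow_eq (h.charpoly_eq _ (commute_add hA hB)) 2
  have h2 := trace_pow_eq (h.charpoly_eq _ hA) 2
  have h3 := trace_pow_eq (h.charpoly_eq _ hB) 2
  simp only [map_add, pow_two, mul_add, add_mul, trace_add] at h1 h2 h3
  rw [trace_mul_comm (ψ B) (ψ A), trace_mul_comm B A] at h1
  linarith

lemma trace_mul_mul (h : Pres n ψ) {A B : Matrix (Fin n) (Fin n) ℝ}
    (hA : avg n * A = A * avg n) (hB : avg n * B = B * avg n) :
    (ψ A * ψ A * ψ B).trace = (A * A * B).trace := by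
  have h1 := trace_pow_eq (h.charpoly_eq _ (commute_add hA hB)) 3
  have h2 := trace_pow_eq (h.charpoly_eq _ (commute_sub hA hB)) 3
  have h3 := trace_pow_eq (h.charpoly_eq _ hB) 3
  have key : ∀ X Y : Matrix (Fin n) (Fin n) ℝ,
      ((X + Y) ^ 3).trace - ((X - Y) ^ 3).trace = 6 * (X * X * Y).trace + 2 * (Y ^ 3).trace := by
    intro X Y
    have e : (X + Y) ^ 3 - (X - Y) ^ 3 =
        2 • (X * X * Y) + 2 • (X * Y * X) + 2 • (Y * X * X) + 2 • Y ^ 3 := by noncomm_ring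
    have e1 : (X * Y * X).trace = (X * X * Y).trace := by
      rw [trace_mul_comm, mul_assoc]
    have e2 : (Y * X * X).trace = (X * X * Y).trace := by
      rw [mul_assoc, trace_mul_comm]
    rw [← trace_sub, e]
    simp only [trace_add, trace_smul, e1, e2]
    simp only [nsmul_eq_mul]
    push_cast
    ring
  have k1 := key (ψ A) (ψ B)
  have k2 := key A B
  rw [map_add] at h1
  rw [map_sub] at h2
  linarith

/-- By `trace_mul`, an element of the kernel is orthogonal to all of `⟨DS_n⟩`. -/
lemma injOn (h : Pres n ψ) {A : Matrix (Fin n) (Fin n) ℝ} (hA : avg n * A = A * avg n)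
    (h0 : ψ A = 0) : A = 0 := by
  refine eq_zero_of_trace hA fun Y hY => ?_
  rw [← h.trace_mul hA hY, h0]; simp

lemma surjOn (h : Pres n ψ) {Y : Matrix (Fin n) (Fin n) ℝ} (hY : avg n * Y = Y * avg n) :
    ∃ A, avg n * A = A * avg n ∧ ψ A = Y := by
  let D : Submodule ℝ (Matrix (Fin n) (Fin n) ℝ) :=
    { carrier := {A | avg n * A = A * avg n}
      add_mem' := fun hA hB => commute_add hA hB
      zero_mem' := by simp
      smul_mem' := fun c A hA => by
        simp only [Set.mem_ofPred_eq] at hA ⊢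
        rw [mul_smul_comm, smul_mul_assoc, hA] }
  let g : D →ₗ[ℝ] D := ψ.restrict (p := D) (q := D) (fun A hA => h.maps A hA)
  have hg : Function.Injective g := by
    rw [← LinearMap.ker_eq_bot, LinearMap.ker_eq_bot']
    intro A hA
    exact Subtype.ext (h.injOn A.2 (congrArg Subtype.val hA))
  obtain ⟨A, hA⟩ := LinearMap.injective_iff_surjective.mp hg ⟨Y, hY⟩
  exact ⟨A.1, A.2, congrArg Subtype.val hA⟩

/-- `ψ(A²) - ψ(A)²` is orthogonal to the image of `ψ` under the trace form. -/
lemma map_sq (h : Pres n ψ) {A : Matrix (Fin n) (Fin n) ℝ} (hA : avg n * A = A * avg n) :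
    ψ (A * A) = ψ A * ψ A := by
  rw [← sub_eq_zero]
  refine eq_zero_of_trace (commute_sub (h.maps _ (commute_mul hA hA))
    (commute_mul (h.maps _ hA) (h.maps _ hA))) fun Y hY => ?_
  obtain ⟨B, hB, rfl⟩ := h.surjOn hY
  rw [sub_mul, trace_sub, h.trace_mul (commute_mul hA hA) hB, h.trace_mul_mul hA hB, sub_self]

lemma map_one (h : Pres n ψ) : ψ 1 = 1 := by
  have h1 : avg n * 1 = 1 * avg n := by simp
  rw [← sub_eq_zero]
  refine eq_zero_of_trace (commute_sub (h.maps _ h1) h1) fun Y hY => ?_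
  obtain ⟨B, hB, rfl⟩ := h.surjOn hY
  rw [sub_mul, trace_sub, h.trace_mul h1 hB, one_mul, one_mul, h.trace_eq hB, sub_self]

lemma map_jordan (h : Pres n ψ) {A B : Matrix (Fin n) (Fin n) ℝ} (hA : avg n * A = A * avg n)
    (hB : avg n * B = B * avg n) : ψ (A * B) + ψ (B * A) = ψ A * ψ B + ψ B * ψ A := by
  have h1 := h.map_sq (commute_add hA hB)
  simp only [mul_add, add_mul, map_add, h.map_sq hA, h.map_sq hB] at h1
  have : ψ (A * B) + ψ (B * A) = (ψ A * ψ A + ψ (B * A) + (ψ (A * B) + ψ B * ψ B)) -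
    ψ A * ψ A - ψ B * ψ B := by abel
  rw [this, h1]
  abel

lemma map_triple (h : Pres n ψ) {A B : Matrix (Fin n) (Fin n) ℝ} (hA : avg n * A = A * avg n)
    (hB : avg n * B = B * avg n) : ψ (A * B * A) = ψ A * ψ B * ψ A := by
  have hAB := h.map_jordan hA (commute_add (commute_mul hA hB) (commute_mul hB hA))
  have hAA := h.map_jordan (commute_mul hA hA) hB
  rw [h.map_sq hA] at hAA
  rw [map_add, h.map_jordan hA hB] at hAB
  have e : A * (A * B + B * A) + (A * B + B * A) * A - (A * A * B + B * (A * A)) =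
    (2 : ℝ) • (A * B * A) := by rw [two_smul]; noncomm_ring
  have e' := congrArg ψ e
  rw [map_sub, map_add, map_add, hAB, hAA, map_smul] at e'
  have e2 : (2 : ℝ) • ψ (A * B * A) = (2 : ℝ) • (ψ A * ψ B * ψ A) := by
    rw [← e', two_smul]; noncomm_ring
  exact smul_right_injective _ (two_ne_zero) e2

lemma map_triple' (h : Pres n ψ) {A B X : Matrix (Fin n) (Fin n) ℝ}
    (hA : avg n * A = A * avg n) (hB : avg n * B = B * avg n) (hX : avg n * X = X * avg n) :
    ψ (A * X * B) + ψ (B * X * A) = ψ A * ψ X * ψ B + ψ B * ψ X * ψ A := by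
  have h1 := h.map_triple (commute_add hA hB) hX
  simp only [mul_add, add_mul, map_add, h.map_triple hA hX, h.map_triple hB hX] at h1
  have : ψ (A * X * B) + ψ (B * X * A) = (ψ A * ψ X * ψ A + ψ (B * X * A) +
    (ψ (A * X * B) + ψ B * ψ X * ψ B)) - ψ A * ψ X * ψ A - ψ B * ψ X * ψ B := by abel
  rw [this, h1]
  abel

/-- `ψ (avg n)` is central in the image of `ψ`: the Jordan product of the central idempotent `avg n`
with `A` is `2 • (avg n * A)`. -/
lemma map_avg_mul (h : Pres n ψ) (hn : 2 ≤ n) {A : Matrix (Fin n) (Fin n) ℝ}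
    (hA : avg n * A = A * avg n) :
    ψ (avg n * A) = ψ (avg n) * ψ A ∧ ψ (avg n * A) = ψ A * ψ (avg n) := by
  have hz := avg_mul_avg hn
  have hq : ψ (avg n) * ψ (avg n) = ψ (avg n) := by rw [← h.map_sq rfl, hz]
  set q := ψ (avg n)
  -- an idempotent `p` satisfying `pY + Yp = 2Y` acts as the identity on `Y` from both sides
  have key : ∀ p Y : Matrix (Fin n) (Fin n) ℝ, p * p = p → p * Y + Y * p = Y + Y →
      p * Y = Y ∧ Y * p = Y := by
    intro p Y hp hY
    have h1 : p * Y * p = p * Y := by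
      have := congrArg (p * ·) hY
      simp only [mul_add, ← mul_assoc, hp] at this
      exact add_left_cancel this
    have h2 : p * Y * p = Y * p := by
      have := congrArg (· * p) hY
      simp only [add_mul, mul_assoc, hp] at this
      rw [mul_assoc]
      exact add_right_cancel this
    have h3 : p * Y = Y * p := h1.symm.trans h2
    have h4 : (2 : ℝ) • (p * Y) = (2 : ℝ) • Y := by
      rw [two_smul, two_smul, ← hY, ← h3]
    have h5 : p * Y = Y := smul_right_injective _ two_ne_zero h4
    exact ⟨h5, h3 ▸ h5⟩
  have k1 := key q (ψ (avg n * A)) hq (by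
    rw [← h.map_jordan rfl (commute_mul rfl hA)]
    have e1 : avg n * (avg n * A) = avg n * A := by rw [← mul_assoc, hz]
    rw [mul_assoc, ← hA, e1])
  have k2 := key (1 - q) (ψ (A - avg n * A)) (by
      rw [sub_mul, mul_sub q, hq]; simp) (by
    have hj := h.map_jordan (A := avg n) (B := A - avg n * A) rfl
      (commute_sub hA (commute_mul rfl hA))
    have e1 : avg n * (A - avg n * A) = 0 := by rw [mul_sub, ← mul_assoc, hz, sub_self]
    have e2 : (A - avg n * A) * avg n = 0 := by
      rw [sub_mul, mul_assoc, ← hA, ← mul_assoc, hz, sub_self]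
    rw [e1, e2, map_zero, add_zero] at hj
    rw [sub_mul, mul_sub, one_mul, mul_one]
    have : ∀ a b c : Matrix (Fin n) (Fin n) ℝ, 0 = b + c → a - b + (a - c) = a + a := by
      intro a b c hbc
      rw [show a - b + (a - c) = a + a - (b + c) by abel, ← hbc, sub_zero]
    exact this _ _ _ hj)
  obtain ⟨k2a, k2b⟩ := k2
  rw [sub_mul, one_mul, sub_eq_self] at k2a
  rw [mul_sub, mul_one, sub_eq_self] at k2b
  rw [map_sub] at k2a k2b
  rw [mul_sub, k1.1, sub_eq_zero] at k2a
  rw [sub_mul, k1.2, sub_eq_zero] at k2b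
  exact ⟨k2a.symm, k2b.symm⟩

end Pres

lemma mul_single_mul_apply {n : ℕ} (M N : Matrix (Fin n) (Fin n) ℝ) (a b c d : Fin n) :
    (M * Matrix.single b c (1 : ℝ) * N) a d = M a b * N c d := by
  rw [Matrix.mul_apply, Finset.sum_eq_single c]
  · simp
  · intro k _ hk
    rw [Matrix.mul_single_apply_of_ne _ _ _ _ _ hk, zero_mul]
  · simp

lemma one_sub_avg_ne_zero {n : ℕ} (hn : 2 ≤ n) (i : Fin n) : (1 - avg n) i i ≠ 0 := by
  have : (2 : ℝ) ≤ n := by exact_mod_cast hn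
  simp only [Matrix.sub_apply, Matrix.one_apply_eq, avg, Matrix.of_apply]
  have : (n : ℝ)⁻¹ < 1 := inv_lt_one_of_one_lt₀ (by linarith)
  linarith

namespace Pres

variable {n : ℕ} {ψ : Matrix (Fin n) (Fin n) ℝ →ₗ[ℝ] Matrix (Fin n) (Fin n) ℝ}

/-- The image of `avg n` is `c • avg n + d • (1 - avg n)` with `c, d ∈ {0, 1}`, since it is a central
idempotent, and its trace `c + d (n - 1)` is one. -/
lemma map_avg (h : Pres n ψ) (hn : 2 ≤ n) :
    ψ (avg n) = avg n ∨ (n = 2 ∧ ψ (avg n) = 1 - avg n) := by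
  have hz := avg_mul_avg hn
  have hq : ψ (avg n) * ψ (avg n) = ψ (avg n) := by rw [← h.map_sq rfl, hz]
  have hqz := h.maps (avg n) rfl
  have hqt : (ψ (avg n)).trace = 1 := by rw [h.trace_eq rfl, trace_avg hn]
  have hqc : ∀ Y, avg n * Y = Y * avg n → ψ (avg n) * Y = Y * ψ (avg n) := by
    intro Y hY
    obtain ⟨A, hA, rfl⟩ := h.surjOn hY
    rw [← (h.map_avg_mul hn hA).1, (h.map_avg_mul hn hA).2]
  set q := ψ (avg n)
  set z := avg n with hzd
  set f := 1 - z with hfd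
  have hff : f * f = f := by rw [hfd, sub_mul, mul_sub z, hz]; simp
  have hzf : z * f = 0 := by rw [hfd, mul_sub, hz]; simp
  have hfz : f * z = 0 := by rw [hfd, sub_mul, hz]; simp
  have hqf : q * f = f * q := by rw [hfd, mul_sub, sub_mul, hqz, one_mul, mul_one]
  let i0 : Fin n := ⟨0, by omega⟩
  have hfi : f i0 i0 ≠ 0 := one_sub_avg_ne_zero hn i0
  obtain ⟨c, hc⟩ := avg_mul_mul_avg q
  rw [← hzd] at hc
  -- `q f` commutes with every `f X f`; testing on matrix units shows that it is a multiple of `f`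
  have hX : ∀ X, q * f * X * f = f * X * (q * f) := by
    intro X
    have h1 := hqc (f * X * f) (by
      rw [← mul_assoc, ← mul_assoc, hzf, mul_assoc (f * X), hfz]; simp)
    calc q * f * X * f = q * (f * X * f) := by simp only [mul_assoc]
      _ = f * X * (f * q) := by rw [h1]; simp only [mul_assoc]
      _ = _ := by rw [hqf]
  have hd : q * f = ((q * f) i0 i0 / f i0 i0) • f := by
    ext a b
    have := congrFun (congrFun (hX (Matrix.single b i0 (1 : ℝ))) a) i0
    rw [mul_single_mul_apply, mul_single_mul_apply] at this
    rw [Matrix.smul_apply, smul_eq_mul, div_mul_eq_mul_div, eq_div_iff hfi]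
    linarith
  set d := (q * f) i0 i0 / f i0 i0
  have hzq : z * q = c • z := by rw [← hc, mul_assoc, ← hqz, ← mul_assoc, hz]
  have hqd : q = c • z + d • f := by
    rw [← hd, ← hzq, hqz, ← mul_add, hfd]; simp
  have hcc : c * c = c := by
    have h1 : z * (q * q) = z * q := by rw [hq]
    rw [← mul_assoc, hzq, smul_mul_assoc, hzq, smul_smul] at h1
    have := congrArg trace h1
    simpa [trace_avg hn, hzd] using this
  have hdd : d * d = d := by
    have h1 : (q * q) * f = q * f := by rw [hq]
    rw [mul_assoc, hd, mul_smul_comm, hd, smul_smul] at h1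
    have := congrFun (congrFun h1 i0) i0
    rw [Matrix.smul_apply, Matrix.smul_apply, smul_eq_mul, smul_eq_mul] at this
    exact mul_right_cancel₀ hfi this
  have hft : f.trace = n - 1 := by rw [hfd, trace_sub, trace_one, hzd, trace_avg hn]; simp
  rw [hqd, trace_add, trace_smul, trace_smul, hft, hzd, trace_avg hn] at hqt
  simp only [smul_eq_mul, mul_one] at hqt
  have hn2 : (2 : ℝ) ≤ n := by exact_mod_cast hn
  have hc' : c = 0 ∨ c = 1 := by
    have : c * (c - 1) = 0 := by linarith
    rcases mul_eq_zero.mp this with h | h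
    · exact Or.inl h
    · exact Or.inr (by linarith)
  have hd' : d = 0 ∨ d = 1 := by
    have : d * (d - 1) = 0 := by linarith
    rcases mul_eq_zero.mp this with h | h
    · exact Or.inl h
    · exact Or.inr (by linarith)
  rcases hc' with hc' | hc' <;> rcases hd' with hd' | hd' <;> rw [hc', hd'] at hqt hqd
  · norm_num at hqt
  · right
    refine ⟨?_, by rw [hqd]; simp⟩
    have : (n : ℝ) = 2 := by linarith
    exact_mod_cast this
  · left
    rw [hqd]; simp
  · linarith

end Pres

/-! ### Multiplicativity or antimultiplicativity -/

/-- A strong form of primeness of the full matrix algebra, tested on matrix units. -/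
lemma eq_zero_or_eq_zero_of_symm {n : ℕ} {α β : Matrix (Fin n) (Fin n) ℝ}
    (h : ∀ X, α * X * β + β * X * α = 0) : α = 0 ∨ β = 0 := by
  have he : ∀ i j k l, α i j * β k l + β i j * α k l = 0 := by
    intro i j k l
    have := congrFun (congrFun (h (Matrix.single j k (1 : ℝ))) i) l
    rwa [Matrix.add_apply, mul_single_mul_apply, mul_single_mul_apply] at this
  by_contra! hne
  obtain ⟨hα, hβ⟩ := hne
  apply hα
  ext i j
  by_contra hij
  rw [Matrix.zero_apply] at hij
  have h1 : β i j = 0 := by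
    have := he i j i j
    have : α i j * β i j = 0 := by linarith
    exact (mul_eq_zero.mp this).resolve_left hij
  apply hβ
  ext k l
  have := he i j k l
  rw [h1, zero_mul, add_zero] at this
  exact (mul_eq_zero.mp this).resolve_left hij

namespace Pres

variable {n : ℕ} {ψ : Matrix (Fin n) (Fin n) ℝ →ₗ[ℝ] Matrix (Fin n) (Fin n) ℝ}

/-- Herstein's argument. Writing `α` and `β` for the two defects, expanding `ψ (ABXBA + BAXAB)` in
two ways gives `α ψ(X) β + β ψ(X) α = 0` for `X ∈ ⟨DS_n⟩`. As `α` and `β` lie in the corner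
`(1 - avg n) M_n(ℝ) (1 - avg n)`, `ψ(X)` may be replaced by an arbitrary matrix. -/
lemma mul_or_mul (h : Pres n ψ) (hn : 2 ≤ n) (hz1 : ψ (avg n) = avg n)
    {A B : Matrix (Fin n) (Fin n) ℝ} (hA : avg n * A = A * avg n) (hB : avg n * B = B * avg n) :
    ψ (A * B) - ψ A * ψ B = 0 ∨ ψ (A * B) - ψ B * ψ A = 0 := by
  have hz := avg_mul_avg hn
  have hAB := commute_mul hA hB
  have hBA := commute_mul hB hA
  have hmA := h.maps A hA
  have hmB := h.maps B hB
  have hJ := h.map_jordan hA hB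
  have key : ∀ X, avg n * X = X * avg n →
      (ψ (A * B) - ψ A * ψ B) * ψ X * (ψ (A * B) - ψ B * ψ A) +
      (ψ (A * B) - ψ B * ψ A) * ψ X * (ψ (A * B) - ψ A * ψ B) = 0 := by
    intro X hX
    have h1 := h.map_triple' hAB hBA hX
    have e1 : A * B * X * (B * A) = A * (B * X * B) * A := by simp only [mul_assoc]
    have e2 : B * A * X * (A * B) = B * (A * X * A) * B := by simp only [mul_assoc]
    rw [e1, e2, h.map_triple hA (commute_mul (commute_mul hB hX) hB),
      h.map_triple hB (commute_mul (commute_mul hA hX) hA), h.map_triple hA hX,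
      h.map_triple hB hX, eq_sub_of_add_eq' hJ] at h1
    rw [← sub_eq_zero] at h1
    rw [← h1]
    noncomm_ring
  -- the `avg` component of the two defects vanishes
  obtain ⟨c, hc⟩ := avg_mul_mul_avg A
  have hcA : avg n * A = c • avg n := by rw [← hc, mul_assoc, ← hA, ← mul_assoc, hz]
  have hcψ : avg n * ψ A = c • avg n := by
    have := (h.map_avg_mul hn hA).1
    rw [hcA, map_smul, hz1] at this
    exact this.symm
  have hzAB : avg n * ψ (A * B) = c • (avg n * ψ B) := by
    have h1 := (h.map_avg_mul hn hAB).1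
    have h2 := (h.map_avg_mul hn hB).1
    rw [hz1] at h1 h2
    rw [← h1, ← mul_assoc, hcA, smul_mul_assoc, map_smul, h2]
  have hα : avg n * (ψ (A * B) - ψ A * ψ B) = 0 := by
    rw [mul_sub, hzAB, ← mul_assoc, hcψ, smul_mul_assoc, sub_self]
  have hβ : avg n * (ψ (A * B) - ψ B * ψ A) = 0 := by
    rw [mul_sub, hzAB, ← mul_assoc, hmB, mul_assoc, hcψ, mul_smul_comm, sub_self]
  have hα' : (ψ (A * B) - ψ A * ψ B) * avg n = 0 := by
    rw [← hα]; exact (commute_sub (h.maps _ hAB) (commute_mul hmA hmB)).symm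
  have hβ' : (ψ (A * B) - ψ B * ψ A) * avg n = 0 := by
    rw [← hβ]; exact (commute_sub (h.maps _ hAB) (commute_mul hmB hmA)).symm
  set α := ψ (A * B) - ψ A * ψ B
  set β := ψ (A * B) - ψ B * ψ A
  apply eq_zero_or_eq_zero_of_symm
  intro X
  have hb := commute_block hn X
  obtain ⟨Y, hY, hYX⟩ := h.surjOn (hb.1.trans hb.2.symm)
  have h1 := key Y hY
  rw [hYX] at h1
  have e : ∀ γ δ : Matrix (Fin n) (Fin n) ℝ, γ * avg n = 0 → avg n * δ = 0 →
      γ * ((1 - avg n) * X * (1 - avg n)) * δ = γ * X * δ := by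
    intro γ δ hγ hδ
    have : γ * ((1 - avg n) * X * (1 - avg n)) * δ =
      (γ - γ * avg n) * X * (δ - avg n * δ) := by noncomm_ring
    rw [this, hγ, hδ, sub_zero, sub_zero]
  rw [e _ _ hα' hβ, e _ _ hβ' hα] at h1
  exact h1

lemma hom_or_antihom (h : Pres n ψ) (hn : 2 ≤ n) (hz1 : ψ (avg n) = avg n) :
    (∀ A B, avg n * A = A * avg n → avg n * B = B * avg n → ψ (A * B) = ψ A * ψ B) ∨
    (∀ A B, avg n * A = A * avg n → avg n * B = B * avg n → ψ (A * B) = ψ B * ψ A) := by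
  have key := fun A B hA hB => h.mul_or_mul hn hz1 (A := A) (B := B) hA hB
  simp only [sub_eq_zero] at key
  -- a group is not the union of two proper subgroups, first in `B` and then in `A`
  have step : ∀ A, avg n * A = A * avg n →
      (∀ B, avg n * B = B * avg n → ψ (A * B) = ψ A * ψ B) ∨
      (∀ B, avg n * B = B * avg n → ψ (A * B) = ψ B * ψ A) := by
    intro A hA
    by_contra! hne
    obtain ⟨⟨B, hB, h1⟩, ⟨C, hC, h2⟩⟩ := hne
    have h3 := (key A B hA hB).resolve_left h1
    have h4 := (key A C hA hC).resolve_right h2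
    rcases key A (B + C) hA (commute_add hB hC) with h5 | h5
    · rw [mul_add, map_add, map_add, mul_add, h4] at h5
      exact h1 (add_right_cancel h5)
    · rw [mul_add, map_add, map_add, add_mul, h3] at h5
      exact h2 (add_left_cancel h5)
  by_contra! hne
  obtain ⟨⟨A, B, hA, hB, h1⟩, ⟨C, E, hC, hE, h2⟩⟩ := hne
  have h3 := (step A hA).resolve_left (fun hh => h1 (hh B hB))
  have h4 := (step C hC).resolve_right (fun hh => h2 (hh E hE))
  rcases step (A + C) (commute_add hA hC) with h5 | h5
  · have := h5 B hB
    rw [add_mul, map_add, map_add, add_mul, h4 B hB] at this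
    exact h1 (add_right_cancel this)
  · have := h5 E hE
    rw [add_mul, map_add, map_add, mul_add, h3 E hE] at this
    exact h2 (add_left_cancel this)

end Pres

/-! ### Multiplicative preservers are inner -/

/-- Skolem–Noether for `⟨DS_n⟩`. With `w` a nonzero vector orthogonal to the all-ones vector and `u`
such that `ψ(w wᵀ) u ≠ 0`, the conjugating matrix is the identity on constant vectors and sends
`v` orthogonal to them to `ψ(v wᵀ) u`. -/
lemma exists_conj {n : ℕ} (hn : 2 ≤ n)
    {ψ : Matrix (Fin n) (Fin n) ℝ →ₗ[ℝ] Matrix (Fin n) (Fin n) ℝ}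
    (hmul : ∀ A B, avg n * A = A * avg n → avg n * B = B * avg n → ψ (A * B) = ψ A * ψ B)
    (hz1 : ψ (avg n) = avg n)
    (hinj : ∀ A, avg n * A = A * avg n → ψ A = 0 → A = 0) :
    ∃ P : Matrix (Fin n) (Fin n) ℝ, InSpanDS P ∧ IsUnit P ∧
      ∀ A, avg n * A = A * avg n → ψ A = P * A * P⁻¹ := by
  have hz := avg_mul_avg hn
  set z := avg n with hzd
  set f := 1 - z with hfd
  have hzf : z * f = 0 := by rw [hfd, mul_sub, hz]; simp
  have hfz : f * z = 0 := by rw [hfd, sub_mul, hz]; simp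
  let i0 : Fin n := ⟨0, by omega⟩
  let w : Fin n → ℝ := fun j => f j i0
  have hwf : w = f *ᵥ Pi.single i0 1 := by ext j; simp [w]
  have hw0 : w ≠ 0 := fun h0 => one_sub_avg_ne_zero hn i0 (congrFun h0 i0)
  have hzw : z *ᵥ w = 0 := by rw [hwf, mulVec_mulVec, hzf, zero_mulVec]
  have hwz : w ᵥ* z = 0 := by
    rw [← mulVec_transpose, hzd, avg_transpose, ← hzd, hzw]
  -- rank-one matrices `v wᵀ` with `v` and `w` orthogonal to the all-ones vector
  have hmem : ∀ v v' : Fin n → ℝ, z *ᵥ v = 0 → z *ᵥ v' = 0 →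
      z * vecMulVec v v' = 0 ∧ vecMulVec v v' * z = 0 := by
    intro v v' hv hv'
    have hv'' : v' ᵥ* z = 0 := by
      rw [← mulVec_transpose, hzd, avg_transpose, ← hzd, hv']
    constructor
    · rw [mul_vecMulVec, hv, zero_vecMulVec]
    · rw [vecMulVec_mul, hv'', vecMulVec_zero]
  have hD : ∀ v v' : Fin n → ℝ, z *ᵥ v = 0 → z *ᵥ v' = 0 →
      z * vecMulVec v v' = vecMulVec v v' * z := fun v v' hv hv' =>
    (hmem v v' hv hv').1.trans (hmem v v' hv hv').2.symm
  have hW : ψ (vecMulVec w w) ≠ 0 := by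
    intro h0
    have h1 := hinj _ (hD w w hzw hzw) h0
    rw [vecMulVec_eq_zero] at h1
    simp [hw0] at h1
  obtain ⟨u, hu⟩ : ∃ u, ψ (vecMulVec w w) *ᵥ u ≠ 0 := by
    by_contra! hne
    exact hW (Matrix.mulVec_injective (funext fun u => by simpa using hne u))
  let T : (Fin n → ℝ) →ₗ[ℝ] (Fin n → ℝ) :=
    { toFun := fun x => ψ (vecMulVec (f *ᵥ x) w) *ᵥ u
      map_add' := fun x y => by rw [mulVec_add, add_vecMulVec, map_add, add_mulVec]
      map_smul' := fun c x => by
        rw [mulVec_smul, smul_vecMulVec, map_smul, smul_mulVec]; rfl }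
  have hzfx : ∀ x, z *ᵥ (f *ᵥ x) = 0 := fun x => by rw [mulVec_mulVec, hzf, zero_mulVec]
  have hzT : ∀ x, z *ᵥ T x = 0 := by
    intro x
    change z *ᵥ (ψ (vecMulVec (f *ᵥ x) w) *ᵥ u) = 0
    have h1 := hmul z (vecMulVec (f *ᵥ x) w) rfl (hD _ _ (hzfx x) hzw)
    rw [(hmem _ _ (hzfx x) hzw).1, map_zero, hz1] at h1
    rw [mulVec_mulVec, ← h1, zero_mulVec]
  let P : Matrix (Fin n) (Fin n) ℝ := z + LinearMap.toMatrix' T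
  have hP : ∀ x, P *ᵥ x = z *ᵥ x + T x := by
    intro x
    simp only [P]
    rw [add_mulVec, LinearMap.toMatrix'_mulVec]
  have hPA : ∀ A, z * A = A * z → P * A = ψ A * P := by
    intro A hA
    apply Matrix.mulVec_injective
    funext x
    rw [← mulVec_mulVec, ← mulVec_mulVec, hP, hP, mulVec_add]
    congr 1
    · obtain ⟨c, hc⟩ := avg_mul_mul_avg A
      rw [← hzd] at hc
      have hcA : A * z = c • z := by rw [← hc, hA, mul_assoc, hz]
      have h2 := hmul A z hA rfl
      rw [hcA, map_smul, hz1] at h2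
      rw [mulVec_mulVec, mulVec_mulVec, ← h2, hA, hcA]
    · change ψ (vecMulVec (f *ᵥ (A *ᵥ x)) w) *ᵥ u = ψ A *ᵥ (ψ (vecMulVec (f *ᵥ x) w) *ᵥ u)
      rw [mulVec_mulVec u (ψ A), ← hmul _ _ hA (hD _ _ (hzfx x) hzw), mul_vecMulVec, mulVec_mulVec,
        mulVec_mulVec]
      have : f * A = A * f := by rw [hfd, sub_mul, mul_sub, hA, one_mul, mul_one]
      rw [this]
  have hU : IsUnit P := by
    rw [← Matrix.mulVec_injective_iff_isUnit, ← Matrix.coe_mulVecLin, ← LinearMap.ker_eq_bot,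
      LinearMap.ker_eq_bot']
    intro x hx
    rw [Matrix.mulVecLin_apply, hP] at hx
    have hzx : z *ᵥ x = 0 := by
      have := congrArg (z *ᵥ ·) hx
      simpa only [mulVec_add, hzT, mulVec_mulVec, hz, mulVec_zero, add_zero] using this
    rw [hzx, zero_add] at hx
    have hfx : f *ᵥ x = x := by rw [hfd, sub_mulVec, hzx]; simp
    have hx' : ψ (vecMulVec x w) *ᵥ u = 0 := by rw [← hfx]; exact hx
    have h1 := hmul _ _ (hD w x hzw hzx) (hD x w hzx hzw)
    rw [vecMulVec_mul_vecMulVec, vecMulVec_smul, map_smul] at h1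
    have h2 := congrArg (ψ (vecMulVec w x) *ᵥ ·) hx'
    simp only [mulVec_mulVec, mulVec_zero] at h2
    rw [← h1, smul_mulVec] at h2
    have h3 := (smul_eq_zero.mp h2).resolve_right hu
    exact dotProduct_self_eq_zero.mp h3
  refine ⟨P, inSpanDS_of_commute hn ?_, hU, fun A hA => ?_⟩
  · have := hPA z rfl
    rw [hz1] at this
    exact this.symm
  · rw [hPA A hA, Matrix.mul_nonsing_inv_cancel_right _ _ ((Matrix.isUnit_iff_isUnit_det P).mp hU)]

/-! ### The preservers for `n = 2` and `n ≥ 3` -/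

lemma Pres.two {ψ : Matrix (Fin 2) (Fin 2) ℝ →ₗ[ℝ] Matrix (Fin 2) (Fin 2) ℝ} (h : Pres 2 ψ) :
    ∃ P : Matrix (Fin 2) (Fin 2) ℝ,
      (P = 1 ∨ P = Matrix.diagonal (fun i => if i.val = 0 then (1:ℝ) else -1)) ∧
      ∀ A, avg 2 * A = A * avg 2 → ψ A = P * A * P⁻¹ := by
  -- a `2 × 2` matrix commuting with `avg 2` is a combination of `1` and `avg 2`
  have hA : ∀ A : Matrix (Fin 2) (Fin 2) ℝ, avg 2 * A = A * avg 2 →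
      A = (A 0 0 - A 0 1) • 1 + (2 * A 0 1) • avg 2 := by
    intro A hA
    have h1 := congrFun (congrFun hA 0) 0
    have h2 := congrFun (congrFun hA 0) 1
    rw [avg_mul, mul_avg] at h1 h2
    simp [Fin.sum_univ_two] at h1 h2
    ext i j
    fin_cases i <;> fin_cases j <;> simp [avg] <;> linarith
  rcases h.map_avg le_rfl with hq | ⟨-, hq⟩
  · refine ⟨1, Or.inl rfl, fun A hAA => ?_⟩
    rw [hA A hAA, map_add, map_smul, map_smul, h.map_one, hq]
    simp
  · refine ⟨_, Or.inr rfl, fun A hAA => ?_⟩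
    set P : Matrix (Fin 2) (Fin 2) ℝ :=
      Matrix.diagonal (fun i => if i.val = 0 then (1:ℝ) else -1) with hPd
    have hPP : P * P = 1 := by
      rw [hPd, diagonal_mul_diagonal, ← diagonal_one]
      congr 1
      ext i
      fin_cases i <;> simp
    have hPz : P * avg 2 * P = 1 - avg 2 := by
      rw [hPd]
      ext i j
      fin_cases i <;> fin_cases j <;> simp [avg] <;> norm_num
    rw [Matrix.inv_eq_right_inv hPP, hA A hAA, map_add, map_smul, map_smul, h.map_one, hq]
    rw [mul_add, add_mul, mul_smul_comm, mul_smul_comm, smul_mul_assoc, smul_mul_assoc, mul_one,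
      hPP, hPz]

lemma Pres.three {n : ℕ} {ψ : Matrix (Fin n) (Fin n) ℝ →ₗ[ℝ] Matrix (Fin n) (Fin n) ℝ}
    (h : Pres n ψ) (hn : 3 ≤ n) :
    ∃ P : Matrix (Fin n) (Fin n) ℝ, InSpanDS P ∧ IsUnit P ∧
      ((∀ A, avg n * A = A * avg n → ψ A = P * A * P⁻¹) ∨
       (∀ A, avg n * A = A * avg n → ψ A = P * Aᵀ * P⁻¹)) := by
  have hn2 : 2 ≤ n := by omega
  have hz1 : ψ (avg n) = avg n := (h.map_avg hn2).resolve_right (by omega)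
  rcases h.hom_or_antihom hn2 hz1 with hm | hm
  · obtain ⟨P, h1, h2, h3⟩ := exists_conj hn2 hm hz1 (fun A hA => h.injOn hA)
    exact ⟨P, h1, h2, Or.inl h3⟩
  · obtain ⟨P, h1, h2, h3⟩ := exists_conj (ψ := ψ ∘ₗ (transposeLinearEquiv _ _ ℝ ℝ).toLinearMap) hn2
      (fun A B hA hB => by
        simpa using hm Bᵀ Aᵀ (commute_transpose hB) (commute_transpose hA))
      (by simpa [avg_transpose] using hz1)
      (fun A hA h0 => by
        have := h.injOn (commute_transpose hA) (by simpa using h0)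
        simpa using this)
    refine ⟨P, h1, h2, Or.inr fun A hA => ?_⟩
    simpa using h3 Aᵀ (commute_transpose hA)

/-! ### Reduction from `⟨RS_n⟩` to `⟨DS_n⟩` -/

/-- The linear map `A ↦ A_DS`. -/
noncomputable def projDS (n : ℕ) : Matrix (Fin n) (Fin n) ℝ →ₗ[ℝ] Matrix (Fin n) (Fin n) ℝ where
  toFun := partDS
  map_add' A B := by simp only [partDS_eq]; noncomm_ring
  map_smul' c A := by
    simp only [partDS_eq, mul_smul_comm, smul_mul_assoc, smul_add, RingHom.id_apply]

lemma pres_of_charpoly {n : ℕ} (hn : 2 ≤ n)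
    {φ : Matrix (Fin n) (Fin n) ℝ →ₗ[ℝ] Matrix (Fin n) (Fin n) ℝ}
    (hφ : ∀ A, InSpanRS A → InSpanRS (φ A))
    (h : ∀ A, InSpanRS A → (φ A).charpoly = A.charpoly) : Pres n (projDS n ∘ₗ φ) where
  maps A _ := commute_partDS hn (φ A)
  charpoly_eq A hA := by
    have hR := inSpanRS_of_commute hn hA
    exact (charpoly_partDS hn (hφ A hR)).trans (h A hR)

/-- `φ(A)_DS` depends only on `A_DS`: the image of `A - A_DS`, which is orthogonal to `⟨DS_n⟩`, is
orthogonal to the image of `⟨DS_n⟩`, which is all of `⟨DS_n⟩`. -/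
lemma partDS_map_partDS {n : ℕ} (hn : 2 ≤ n)
    {φ : Matrix (Fin n) (Fin n) ℝ →ₗ[ℝ] Matrix (Fin n) (Fin n) ℝ}
    (hφ : ∀ A, InSpanRS A → InSpanRS (φ A))
    (h : ∀ A, InSpanRS A → (φ A).charpoly = A.charpoly)
    {A : Matrix (Fin n) (Fin n) ℝ} (hA : InSpanRS A) :
    partDS (φ A) = (projDS n ∘ₗ φ) (partDS A) := by
  have hz := avg_mul_avg hn
  have hP := pres_of_charpoly hn hφ h
  have hadd : ∀ {A B : Matrix (Fin n) (Fin n) ℝ}, InSpanRS A → InSpanRS B → InSpanRS (A + B) := by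
    intro A B hA hB
    rw [inSpanRS_iff hn] at *
    rw [mul_add, add_mul, add_mul, hA, hB]
  have hc : ∀ A, InSpanRS A → ((projDS n ∘ₗ φ) A).charpoly = A.charpoly := fun A hA =>
    (charpoly_partDS hn (hφ A hA)).trans (h A hA)
  -- trace form on the row-stochastic span
  have htr : ∀ A B, InSpanRS A → InSpanRS B →
      ((projDS n ∘ₗ φ) A * (projDS n ∘ₗ φ) B).trace = (A * B).trace := by
    intro A B hA hB
    have h1 := trace_pow_eq (hc _ (hadd hA hB)) 2
    have h2 := trace_pow_eq (hc _ hA) 2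
    have h3 := trace_pow_eq (hc _ hB) 2
    simp only [map_add, pow_two, mul_add, add_mul, trace_add] at h1 h2 h3
    rw [trace_mul_comm ((projDS n ∘ₗ φ) B) ((projDS n ∘ₗ φ) A), trace_mul_comm B A] at h1
    linarith
  change (projDS n ∘ₗ φ) A = _
  have hDR := inSpanRS_of_commute hn (commute_partDS hn A)
  rw [← sub_eq_zero]
  refine eq_zero_of_trace (commute_sub (commute_partDS hn (φ A)) (hP.maps _ (commute_partDS hn A)))
    fun Y hY => ?_
  obtain ⟨B, hB, rfl⟩ := hP.surjOn hY
  have hBR := inSpanRS_of_commute hn hB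
  rw [sub_mul, trace_sub, htr _ _ hA hBR, htr _ _ hDR hBR, ← trace_sub, ← sub_mul]
  have e : (A - partDS A) * B = avg n * A * ((1 - avg n) * B) + (1 - avg n) * A * (avg n * B) := by
    rw [partDS_eq]; noncomm_ring
  have e1 : ((1 - avg n) * B) = B * (1 - avg n) := by rw [sub_mul, mul_sub, hB]; simp
  have e2 : (1 - avg n) * avg n = 0 := by rw [sub_mul, hz]; simp
  have e3 : avg n * (1 - avg n) = 0 := by rw [mul_sub, hz]; simp
  rw [e, trace_add, e1, hB, ← mul_assoc, trace_mul_comm, ← mul_assoc, ← mul_assoc, e2,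
    ← mul_assoc ((1 - avg n) * A) B,
    trace_mul_comm _ (avg n), ← mul_assoc, ← mul_assoc, e3]
  simp

lemma charpoly_conj {n : ℕ} {P : Matrix (Fin n) (Fin n) ℝ} (hP : IsUnit P)
    (A : Matrix (Fin n) (Fin n) ℝ) : (P * A * P⁻¹).charpoly = A.charpoly := by
  obtain ⟨U, rfl⟩ := hP
  exact charpoly_units_conj U A

theorem stmt17 (n : ℕ) (hn : 2 ≤ n)
    (φ : Matrix (Fin n) (Fin n) ℝ →ₗ[ℝ] Matrix (Fin n) (Fin n) ℝ)
    (hφ : ∀ A, InSpanRS A → InSpanRS (φ A)) :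
    (∀ A, InSpanRS A → (φ A).charpoly = A.charpoly) ↔
    ((n = 2 ∧ ∃ P : Matrix (Fin n) (Fin n) ℝ,
        (P = 1 ∨ P = Matrix.diagonal (fun i => if i.val = 0 then (1:ℝ) else -1)) ∧
        ∀ A, InSpanRS A → partDS (φ A) = P * partDS A * P⁻¹) ∨
     (3 ≤ n ∧ ∃ P : Matrix (Fin n) (Fin n) ℝ, InSpanDS P ∧ IsUnit P ∧
        ((∀ A, InSpanRS A → partDS (φ A) = P * partDS A * P⁻¹) ∨
         (∀ A, InSpanRS A → partDS (φ A) = P * (partDS A)ᵀ * P⁻¹)))) := by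
  constructor
  · intro h
    have hP := pres_of_charpoly hn hφ h
    have hred := fun A hA => partDS_map_partDS hn hφ h (A := A) hA
    rcases hn.eq_or_lt with rfl | hn3
    · obtain ⟨P, h1, h2⟩ := hP.two
      refine Or.inl ⟨rfl, P, h1, fun A hA => ?_⟩
      rw [hred A hA, h2 _ (commute_partDS hn A)]
    · obtain ⟨P, h1, h2, h3⟩ := hP.three hn3
      refine Or.inr ⟨hn3, P, h1, h2, h3.imp (fun h3 A hA => ?_) (fun h3 A hA => ?_)⟩ <;>
        rw [hred A hA, h3 _ (commute_partDS hn A)]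
  · intro h A hA
    rw [← charpoly_partDS hn hA, ← charpoly_partDS hn (hφ A hA)]
    rcases h with ⟨-, P, hP, h⟩ | ⟨-, P, -, hU, h | h⟩
    · have hU : IsUnit P := by
        rcases hP with rfl | rfl
        · exact isUnit_one
        · rw [Matrix.isUnit_diagonal, Pi.isUnit_iff]
          intro i
          split_ifs <;> simp
      rw [h A hA, charpoly_conj hU]
    · rw [h A hA, charpoly_conj hU]
    · rw [h A hA, charpoly_conj hU, charpoly_transpose]
end

section
/- Let n ≥ 2 and let φ : RS_n → RS_n be a linear map. Then φ(A) and A have the same characteristic polynomial for every A ∈ RS_n if and only if: when n = 2, there exists a constant c ∈ [−1, 1] such that φ(A) = A_DS + c·A_R for all A ∈ RS_2; and when n ≥ 3, there exists a permutation matrix P ∈ P_n such that φ(A) = P A Pᵀ for all A ∈ RS_n. -/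
/-!
Write `L i j = E_{ij} - E_{ii}` for `i ≠ j`. Every row stochastic `A` equals
`1 + ∑ A i j • L i j`, so it suffices to find `φ 1` and the images of the `L i j`.
Equal characteristic polynomials give equal traces and equal traces of squares, and by
polarization `tr (φ A * φ B) = tr (A * B)`; nothing else about the spectrum is needed.

* `φ 1` is row stochastic of trace `n`, so `φ 1 = 1`. Hence `M = φ (L i j)` has nonnegative
  off-diagonal entries, zero row sums and trace `-1`.
* If `f` has no fixed point, the image of its 0-1 matrix has trace zero, hence zero diagonal.
  Redirecting one value of `f` shows that the diagonal of `φ (L i j)` does not depend on `j`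
  (`diag_indep`).
* From `tr (M²) = 1 = (tr M)²` and `M k l ≤ -M k k` one gets `M k l * M l k = M k k * M l l`
  for all `k`, `l`. If two diagonal entries of `M` were nonzero, `M` would be determined by its
  diagonal, so `φ (L i j)` would be independent of `j`; for `n ≥ 3` this contradicts
  `tr (L i j * L j i) = 1 ≠ 0 = tr (L i j' * L j i)` (`diag_single`).
* So the diagonal of `φ (L i j)` is supported at one index `σ i`, the map `σ` is a permutation
  (`exists_perm`), and `tr (L i j * L j i) = 1` forces `φ (L i j) = L (σ i) (σ j)`
  (`map_move_eq`), which is conjugation by a permutation matrix.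

For `n = 2` the same facts leave one free parameter (`forward_two`). Conversely, a 2 × 2 matrix
with row sums `1` has determinant `trace - 1`, and `A_DS + c • A_R` has the trace of `A`.
-/

open Matrix

/-- A linear map that preserves row stochasticity and, on row stochastic matrices, the
characteristic polynomial. -/
structure SpecPres {n : ℕ}
    (φ : Matrix (Fin n) (Fin n) ℝ →ₗ[ℝ] Matrix (Fin n) (Fin n) ℝ) : Prop where
  rs : ∀ A, IsRS A → IsRS (φ A)
  cp : ∀ A, IsRS A → (φ A).charpoly = A.charpoly

/-- `L i j = E_{ij} - E_{ii}`: moves the diagonal mass of row `i` of the identity to column `j`.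
Together with `1` these matrices span the row stochastic matrices. -/
def moveMat {n : ℕ} (i j : Fin n) : Matrix (Fin n) (Fin n) ℝ := single i j 1 - single i i 1

/-- The 0-1 row stochastic matrix of a function `f`, with its `1` of row `i` in column `f i`. -/
def funMat {n : ℕ} (f : Fin n → Fin n) : Matrix (Fin n) (Fin n) ℝ :=
  Matrix.of fun i j => if f i = j then 1 else 0

/-! ### Row stochastic matrices and traces -/

section aux
variable {n : ℕ}

lemma moveMat_apply (i j k l : Fin n) :
    moveMat i j k l = if i = k then ((if j = l then 1 else 0) - (if i = l then 1 else 0)) else 0 := by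
  by_cases h : i = k <;> simp [moveMat, Matrix.single_apply, h]

lemma moveMat_self (i : Fin n) : moveMat i i = 0 := by simp [moveMat]

lemma isRS_funMat (f : Fin n → Fin n) : IsRS (funMat f) := by
  refine ⟨fun i j => ?_, fun i => ?_⟩
  · simp only [funMat, Matrix.of_apply]; split_ifs <;> norm_num
  · simp [funMat]

lemma funMat_id : funMat (id : Fin n → Fin n) = 1 := by
  ext i j; simp [funMat, Matrix.one_apply]

lemma isRS_one : IsRS (1 : Matrix (Fin n) (Fin n) ℝ) := funMat_id (n := n) ▸ isRS_funMat _

lemma funMat_eq (f : Fin n → Fin n) : funMat f = 1 + ∑ m, moveMat m (f m) := by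
  ext i j
  simp [funMat, Matrix.sum_apply, moveMat_apply, Matrix.one_apply]

lemma moveMat_eq (i j : Fin n) : moveMat i j = funMat (Function.update id i j) - 1 := by
  ext k l
  by_cases h : i = k
  · subst h; simp [moveMat_apply, funMat, Matrix.one_apply]
  · simp [moveMat_apply, funMat, Matrix.one_apply, h, Function.update_of_ne (Ne.symm h)]

lemma rs_expand {A : Matrix (Fin n) (Fin n) ℝ} (hA : IsRS A) :
    A = 1 + ∑ i, ∑ j, A i j • moveMat i j := by
  ext k l
  simp only [Matrix.add_apply, Matrix.sum_apply, Matrix.smul_apply, moveMat_apply, smul_eq_mul]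
  rw [Finset.sum_eq_single k]
  · simp [mul_sub, Finset.sum_sub_distrib, hA.2 k, Matrix.one_apply]
  · intro b _ hb; simp [hb]
  · simp

/-- The characteristic polynomial determines the trace of the square, because
`det (1 - t A) det (1 + t A) = det (1 - t² A²)`. -/
lemma trace_sq_of_charpoly {A B : Matrix (Fin n) (Fin n) ℝ} (h : A.charpoly = B.charpoly) :
    (A * A).trace = (B * B).trace := by
  have hr : A.charpolyRev = B.charpolyRev := by
    rw [← Matrix.reverse_charpoly, ← Matrix.reverse_charpoly, h]
  have ev : ∀ (M : Matrix (Fin n) (Fin n) ℝ) (t : ℝ),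
      M.charpolyRev.eval t = (1 - t • M).det := by
    intro M t
    rw [Matrix.charpolyRev, ← Polynomial.coe_evalRingHom, RingHom.map_det]
    congr 1
    ext i j
    by_cases hij : i = j <;> simp [hij, mul_comm (M _ _) t]
  have key : ∀ (M : Matrix (Fin n) (Fin n) ℝ) (t : ℝ),
      (M * M).charpolyRev.eval (t * t) = M.charpolyRev.eval t * M.charpolyRev.eval (-t) := by
    intro M t
    rw [ev, ev, ev, ← Matrix.det_mul]
    congr 1
    rw [sub_mul, mul_sub, mul_sub]
    simp only [one_mul, mul_one, Matrix.smul_mul, Matrix.mul_smul, neg_smul, mul_neg,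
      smul_smul]
    abel
  have hsq : (A * A).charpolyRev = (B * B).charpolyRev := by
    refine Polynomial.eq_of_infinite_eval_eq _ _ ((Set.Ici_infinite (0 : ℝ)).mono ?_)
    intro s hs
    have : s = √s * √s := (Real.mul_self_sqrt hs).symm
    show _ = _
    rw [this, key, key, hr]
  have h1 := Matrix.coeff_charpolyRev_eq_neg_trace (A * A)
  rw [hsq, Matrix.coeff_charpolyRev_eq_neg_trace] at h1
  linarith

lemma trace_of_charpoly {A B : Matrix (Fin n) (Fin n) ℝ} (h : A.charpoly = B.charpoly) :
    A.trace = B.trace := by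
  rw [Matrix.trace_eq_neg_charpoly_nextCoeff, h, ← Matrix.trace_eq_neg_charpoly_nextCoeff]

lemma trace_move_mul_rev {i j : Fin n} (h : i ≠ j) :
    (moveMat i j * moveMat j i).trace = 1 := by
  simp [moveMat, sub_mul, mul_sub, Matrix.single_mul_single_of_ne, h,
    Matrix.trace_single_eq_of_ne]

lemma trace_move_mul_rev' {i j k : Fin n} (h : i ≠ j) (hk : k ≠ j) :
    (moveMat i k * moveMat j i).trace = 0 := by
  simp [moveMat, sub_mul, mul_sub, Matrix.single_mul_single_of_ne, h, hk]

lemma trace_move_sq {i j : Fin n} (h : i ≠ j) :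
    (moveMat i j * moveMat i j).trace = 1 := by
  simp [moveMat, sub_mul, mul_sub, Matrix.single_mul_single_of_ne, h, h.symm,
    Matrix.trace_single_eq_of_ne]

variable {φ : Matrix (Fin n) (Fin n) ℝ →ₗ[ℝ] Matrix (Fin n) (Fin n) ℝ}

/-- Polarization of `trace_sq_of_charpoly` at the midpoint of `A` and `B`. -/
lemma trace_mul_rs (H : SpecPres φ) {A B : Matrix (Fin n) (Fin n) ℝ} (hA : IsRS A)
    (hB : IsRS B) : (φ A * φ B).trace = (A * B).trace := by
  have hM : IsRS ((2⁻¹ : ℝ) • (A + B)) := by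
    refine ⟨fun i j => ?_, fun i => ?_⟩
    · have := hA.1 i j
      have := hB.1 i j
      simp only [Matrix.smul_apply, Matrix.add_apply, smul_eq_mul]; positivity
    · simp only [Matrix.smul_apply, Matrix.add_apply, smul_eq_mul, ← Finset.mul_sum,
        Finset.sum_add_distrib, hA.2, hB.2]
      norm_num
  have a := trace_sq_of_charpoly (H.cp _ hA)
  have b := trace_sq_of_charpoly (H.cp _ hB)
  have c := trace_sq_of_charpoly (H.cp _ hM)
  simp only [map_smul, map_add, Matrix.smul_mul, Matrix.mul_smul, add_mul, mul_add,
    Matrix.trace_smul, Matrix.trace_add, smul_eq_mul] at c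
  rw [Matrix.trace_mul_comm (φ B) (φ A), Matrix.trace_mul_comm B A] at c
  linarith

lemma trace_mul_move (H : SpecPres φ) (i j k l : Fin n) :
    (φ (moveMat i j) * φ (moveMat k l)).trace = (moveMat i j * moveMat k l).trace := by
  rw [moveMat_eq i j, moveMat_eq k l]
  simp only [map_sub, sub_mul, mul_sub, Matrix.trace_sub]
  rw [trace_mul_rs H (isRS_funMat _) (isRS_funMat _), trace_mul_rs H isRS_one (isRS_funMat _),
    trace_mul_rs H (isRS_funMat _) isRS_one, trace_mul_rs H isRS_one isRS_one]

lemma rs_le_one {A : Matrix (Fin n) (Fin n) ℝ} (hA : IsRS A) (i j : Fin n) : A i j ≤ 1 := by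
  rw [← hA.2 i]
  exact Finset.single_le_sum (fun j _ => hA.1 i j) (Finset.mem_univ j)

/-! ### Images of the matrices `moveMat` -/

/-- `φ 1` has trace `n`, and a row stochastic matrix of trace `n` is the identity. -/
lemma map_one_eq (H : SpecPres φ) : φ 1 = 1 := by
  have h1 := H.rs 1 isRS_one
  have ht : (φ 1).trace = n := by
    rw [trace_of_charpoly (H.cp 1 isRS_one)]; simp
  have hd : ∀ i, φ 1 i i = 1 := by
    have h0 : ∑ i, (1 - φ 1 i i) = 0 := by
      rw [Finset.sum_sub_distrib]
      simp only [Matrix.trace, Matrix.diag_apply] at ht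
      simp [ht]
    intro i
    have := (Finset.sum_eq_zero_iff_of_nonneg
      (fun i _ => sub_nonneg.2 (rs_le_one h1 i i))).1 h0 i (Finset.mem_univ i)
    linarith
  ext i j
  by_cases hij : i = j
  · subst hij; simp [hd]
  · have h2 := h1.2 i
    rw [← Finset.add_sum_erase _ _ (Finset.mem_univ i), hd] at h2
    have h3 : ∑ k ∈ Finset.univ.erase i, φ 1 i k = 0 := by linarith
    rw [Matrix.one_apply_ne hij]
    exact (Finset.sum_eq_zero_iff_of_nonneg (fun k _ => h1.1 i k)).1 h3 j
      (by simp [Ne.symm hij])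

lemma map_move (H : SpecPres φ) (i j : Fin n) :
    φ (moveMat i j) = φ (funMat (Function.update id i j)) - 1 := by
  rw [moveMat_eq, map_sub, map_one_eq H]

lemma move_offdiag (H : SpecPres φ) (i j : Fin n) {k l : Fin n} (h : k ≠ l) :
    0 ≤ φ (moveMat i j) k l := by
  rw [map_move H]
  simpa [Matrix.one_apply_ne h] using (H.rs _ (isRS_funMat (Function.update id i j))).1 k l

lemma move_diag (H : SpecPres φ) (i j k : Fin n) : φ (moveMat i j) k k ≤ 0 := by
  rw [map_move H]
  simpa using rs_le_one (H.rs _ (isRS_funMat (Function.update id i j))) k k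

lemma move_row (H : SpecPres φ) (i j k : Fin n) : ∑ l, φ (moveMat i j) k l = 0 := by
  rw [map_move H]
  simp [Finset.sum_sub_distrib, (H.rs _ (isRS_funMat (Function.update id i j))).2,
    Matrix.one_apply]

lemma move_trace (H : SpecPres φ) {i j : Fin n} (h : i ≠ j) : (φ (moveMat i j)).trace = -1 := by
  rw [map_move H, Matrix.trace_sub,
    trace_of_charpoly (H.cp _ (isRS_funMat (Function.update id i j))), ← Matrix.trace_sub,
    ← moveMat_eq]
  simp [moveMat, Matrix.trace_single_eq_of_ne, h]

/-- If `f` has no fixed point then `φ (funMat f)` has trace zero, hence zero diagonal. -/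
lemma derangement_diag (H : SpecPres φ) (f : Fin n → Fin n) (hf : ∀ m, f m ≠ m) (k : Fin n) :
    ∑ m, φ (moveMat m (f m)) k k = -1 := by
  have h1 := H.rs _ (isRS_funMat f)
  have ht : (φ (funMat f)).trace = 0 := by
    rw [trace_of_charpoly (H.cp _ (isRS_funMat f))]
    simp [Matrix.trace, funMat, hf]
  have h0 := (Finset.sum_eq_zero_iff_of_nonneg (fun i _ => h1.1 i i)).1 ht k (Finset.mem_univ k)
  rw [funMat_eq, map_add, map_sum, map_one_eq H] at h0
  simp only [Matrix.add_apply, Matrix.sum_apply, Matrix.one_apply_eq] at h0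
  linarith

/-- The diagonal of `φ (moveMat i j)` does not depend on `j ≠ i`: redirecting one value of a
fixed-point-free function leaves it fixed-point-free. -/
lemma diag_indep (H : SpecPres φ) (hn : 2 ≤ n) {i j j' : Fin n} (hj : j ≠ i) (hj' : j' ≠ i)
    (k : Fin n) : φ (moveMat i j) k k = φ (moveMat i j') k k := by
  have : Nontrivial (Fin n) := Fin.nontrivial_iff_two_le.2 hn
  choose g hg using fun m : Fin n => exists_ne m
  have key : ∀ a, a ≠ i → φ (moveMat i a) k k +
      ∑ m ∈ Finset.univ.erase i, φ (moveMat m (g m)) k k = -1 := by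
    intro a ha
    have h := derangement_diag H (Function.update g i a) (fun m => by
      by_cases hm : m = i
      · subst hm; simpa using ha
      · simpa [Function.update_of_ne hm] using hg m) k
    rw [← Finset.add_sum_erase _ _ (Finset.mem_univ i), Function.update_self] at h
    rw [← h]
    congr 1
    refine Finset.sum_congr rfl fun m hm => ?_
    rw [Function.update_of_ne (Finset.ne_of_mem_erase hm)]
  linarith [key j hj, key j' hj']

lemma entry_le (H : SpecPres φ) (i j : Fin n) {k l : Fin n} (h : k ≠ l) :
    φ (moveMat i j) k l ≤ -φ (moveMat i j) k k := by
  have h1 := move_row H i j k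
  rw [← Finset.add_sum_erase _ _ (Finset.mem_univ k)] at h1
  have : φ (moveMat i j) k l ≤ _ := Finset.single_le_sum (f := fun l => φ (moveMat i j) k l)
    (s := Finset.univ.erase k) (fun m hm => move_offdiag H i j (Finset.ne_of_mem_erase hm).symm)
    (show l ∈ Finset.univ.erase k by simp [h.symm])
  linarith

/-- Comparing `tr (M²) = 1 = (tr M)²` for `M = φ (moveMat i j)` forces equality in
`M k l * M l k ≤ M k k * M l l`. -/
lemma entry_mul (H : SpecPres φ) {i j : Fin n} (hij : i ≠ j) (k l : Fin n) :
    φ (moveMat i j) k l * φ (moveMat i j) l k = φ (moveMat i j) k k * φ (moveMat i j) l l := by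
  set M := φ (moveMat i j) with hM
  have hle : ∀ k l, 0 ≤ M k k * M l l - M k l * M l k := by
    intro k l
    by_cases h : k = l
    · subst h; simp
    · have a := entry_le H i j h
      have b := entry_le H i j (Ne.symm h)
      have c := move_offdiag H i j h
      have d := move_offdiag H i j (Ne.symm h)
      have := mul_le_mul a b d (by linarith [move_diag H i j k])
      rw [← hM] at *
      nlinarith
  have h1 : (M * M).trace = 1 := by rw [hM, trace_mul_move H, trace_move_sq hij]
  have h2 : M.trace * M.trace = 1 := by rw [hM, move_trace H hij]; norm_num
  have h3 : ∑ k, ∑ l, (M k k * M l l - M k l * M l k) = 0 := by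
    simp only [Finset.sum_sub_distrib]
    rw [← Finset.sum_mul_sum]
    simp only [Matrix.trace, Matrix.diag_apply, Matrix.mul_apply] at h1 h2
    rw [h1, h2]; norm_num
  have h4 := (Finset.sum_eq_zero_iff_of_nonneg
    (fun k _ => Finset.sum_nonneg fun l _ => hle k l)).1 h3 k (Finset.mem_univ k)
  have h5 := (Finset.sum_eq_zero_iff_of_nonneg (fun l _ => hle k l)).1 h4 l (Finset.mem_univ l)
  linarith

/-- If all the mass of row `k` of `φ (moveMat i j)` is at column `l`, the other entries vanish. -/
lemma row_of_full (H : SpecPres φ) {i j k l : Fin n} (h : k ≠ l)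
    (hf : φ (moveMat i j) k l = -φ (moveMat i j) k k) {m : Fin n} (hk : m ≠ k) (hl : m ≠ l) :
    φ (moveMat i j) k m = 0 := by
  have h1 := move_row H i j k
  rw [← Finset.add_sum_erase _ _ (Finset.mem_univ k),
    ← Finset.add_sum_erase _ _ (show l ∈ Finset.univ.erase k by simp [h.symm]), hf] at h1
  have h2 : ∑ x ∈ (Finset.univ.erase k).erase l, φ (moveMat i j) k x = 0 := by linarith
  exact (Finset.sum_eq_zero_iff_of_nonneg (fun x hx => move_offdiag H i j (by
    simp only [Finset.mem_erase] at hx; exact hx.2.1.symm))).1 h2 m (by simp [hk, hl])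

/-- If two diagonal entries `k ≠ l` are nonzero then the row `k` is determined: all its mass is
at column `l`. -/
lemma full_of_two (H : SpecPres φ) {i j : Fin n} (hij : i ≠ j) {k l : Fin n} (h : k ≠ l)
    (hk : φ (moveMat i j) k k ≠ 0) (hl : φ (moveMat i j) l l ≠ 0) :
    φ (moveMat i j) k l = -φ (moveMat i j) k k := by
  have a := entry_le H i j h
  have b := entry_le H i j h.symm
  have c := entry_mul H hij k l
  have d := move_offdiag H i j h
  have hk' := lt_of_le_of_ne (move_diag H i j k) hk
  have hl' := lt_of_le_of_ne (move_diag H i j l) hl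
  refine le_antisymm a ?_
  by_contra! hlt
  nlinarith [mul_le_mul_of_nonneg_left b d]

/-- For `n ≥ 3` the diagonal of `φ (moveMat i j)` has a single nonzero entry: otherwise
`φ (moveMat i j)` would be determined by its diagonal, hence would not depend on `j`. -/
lemma diag_single (H : SpecPres φ) (hn : 3 ≤ n) {i j : Fin n} (hij : i ≠ j) {k l : Fin n}
    (h : k ≠ l) (hk : φ (moveMat i j) k k ≠ 0) : φ (moveMat i j) l l = 0 := by
  by_contra hl
  obtain ⟨j', hj'⟩ : ∃ j', j' ∉ ({i, j} : Finset (Fin n)) := by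
    by_contra! hc
    have h1 := Finset.card_le_card (fun x _ => hc x : Finset.univ ⊆ ({i, j} : Finset (Fin n)))
    have h2 := Finset.card_le_two (a := i) (b := j)
    simp only [Finset.card_univ, Fintype.card_fin] at h1
    omega
  simp only [Finset.mem_insert, Finset.mem_singleton, not_or] at hj'
  have hd : ∀ p, φ (moveMat i j) p p = φ (moveMat i j') p p :=
    fun p => diag_indep H (by omega) hij.symm hj'.1 p
  have heq : φ (moveMat i j) = φ (moveMat i j') := by
    ext p r
    by_cases hpr : p = r
    · subst hpr; exact hd p
    by_cases hp : φ (moveMat i j) p p = 0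
    · have a := entry_le H i j hpr
      have b := entry_le H i j' hpr
      have c := move_offdiag H i j hpr
      have d := move_offdiag H i j' hpr
      have e := hd p
      linarith
    · obtain ⟨q, hpq, hq⟩ : ∃ q, p ≠ q ∧ φ (moveMat i j) q q ≠ 0 := by
        by_cases hpk : p = k
        · exact ⟨l, hpk ▸ h, hl⟩
        · exact ⟨k, hpk, hk⟩
      have f1 := full_of_two H hij hpq hp hq
      have f2 := full_of_two H (Ne.symm hj'.1) hpq (hd p ▸ hp) (hd q ▸ hq)
      by_cases hrq : r = q
      · subst hrq; rw [f1, f2, hd p]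
      · rw [row_of_full H hpq f1 (Ne.symm hpr) hrq, row_of_full H hpq f2 (Ne.symm hpr) hrq]
  have t1 := trace_mul_move H i j j i
  have t2 := trace_mul_move H i j' j i
  rw [heq, t2, trace_move_mul_rev hij, trace_move_mul_rev' hij hj'.2] at t1
  norm_num at t1

/-- Row `i` is sent to row `σ i`: the only nonzero diagonal entry of `φ (moveMat i j)` is the one
at `σ i`. Injectivity of `σ` comes from the column sums in `derangement_diag`. -/
lemma exists_perm (H : SpecPres φ) (hn : 3 ≤ n) : ∃ σ : Equiv.Perm (Fin n),
    ∀ i j, i ≠ j → ∀ k, φ (moveMat i j) k k = if k = σ i then -1 else 0 := by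
  have : Nontrivial (Fin n) := Fin.nontrivial_iff_two_le.2 (by omega)
  choose g hg using fun m : Fin n => exists_ne m
  have h1 : ∀ i, ∃ k, φ (moveMat i (g i)) k k ≠ 0 := by
    intro i
    by_contra! hc
    have := move_trace H (hg i).symm
    simp [Matrix.trace, hc] at this
  choose s hs using h1
  have hs0 : ∀ i k, k ≠ s i → φ (moveMat i (g i)) k k = 0 :=
    fun i k hk => diag_single H hn (hg i).symm (Ne.symm hk) (hs i)
  have hs1 : ∀ i, φ (moveMat i (g i)) (s i) (s i) = -1 := by
    intro i
    have := move_trace H (hg i).symm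
    rw [Matrix.trace, Finset.sum_eq_single (s i)] at this
    · exact this
    · intro b _ hb; exact hs0 i b hb
    · simp
  have hinj : Function.Injective s := by
    intro a b hab
    by_contra hne
    have hd := derangement_diag H g hg (s a)
    rw [← Finset.add_sum_erase _ _ (Finset.mem_univ a),
      ← Finset.add_sum_erase _ _ (show b ∈ Finset.univ.erase a by simp [Ne.symm hne]), hs1 a] at hd
    have hb := hs1 b
    rw [← hab] at hb
    have := Finset.sum_nonpos (s := (Finset.univ.erase a).erase b)
      (f := fun m => φ (moveMat m (g m)) (s a) (s a)) (fun m _ => move_diag H _ _ _)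
    linarith
  refine ⟨Equiv.ofBijective s (Finite.injective_iff_bijective.1 hinj), fun i j hij k => ?_⟩
  rw [diag_indep H (by omega) hij.symm (hg i) k, Equiv.ofBijective_apply]
  split_ifs with hk
  · rw [hk, hs1]
  · exact hs0 i k hk

/-- Row `σ i` is the only nonzero row of `φ (moveMat i j)`. The trace of
`φ (moveMat i j) * φ (moveMat j i)` is therefore a product of two entries in `[0, 1]`; since it
is `1`, all the mass of that row is at column `σ j`. -/
lemma map_move_eq (H : SpecPres φ) {σ : Equiv.Perm (Fin n)}
    (hσ : ∀ i j, i ≠ j → ∀ k, φ (moveMat i j) k k = if k = σ i then -1 else 0) (i j : Fin n) :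
    φ (moveMat i j) = moveMat (σ i) (σ j) := by
  by_cases hij : i = j
  · subst hij; simp [moveMat_self]
  have hz : ∀ i j, i ≠ j → ∀ k l, k ≠ σ i → φ (moveMat i j) k l = 0 := by
    intro i j hij k l hk
    have h0 := hσ i j hij k
    rw [if_neg hk] at h0
    by_cases hkl : k = l
    · rw [← hkl, h0]
    · have a := entry_le H i j hkl
      have b := move_offdiag H i j hkl
      linarith
  have hne : σ i ≠ σ j := fun h => hij (σ.injective h)
  have hsi : φ (moveMat i j) (σ i) (σ i) = -1 := by rw [hσ i j hij]; simp
  have hsj : φ (moveMat j i) (σ j) (σ j) = -1 := by rw [hσ j i (Ne.symm hij)]; simp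
  -- Only one product survives in the trace of the product of the two images.
  have ht : φ (moveMat i j) (σ i) (σ j) * φ (moveMat j i) (σ j) (σ i) = 1 := by
    rw [← trace_move_mul_rev hij, ← trace_mul_move H, Matrix.trace, Finset.sum_eq_single (σ i),
      Matrix.diag_apply, Matrix.mul_apply, Finset.sum_eq_single (σ j)]
    · intro b _ hb; rw [hz j i (Ne.symm hij) b _ hb, mul_zero]
    · simp
    · intro b _ hb
      rw [Matrix.diag_apply, Matrix.mul_apply]
      exact Finset.sum_eq_zero fun c _ => by rw [hz i j hij b _ hb, zero_mul]
    · simp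
  have hfull : φ (moveMat i j) (σ i) (σ j) = 1 := by
    have a := entry_le H i j hne
    have b := entry_le H j i hne.symm
    have c := move_offdiag H i j hne
    rw [hsi] at a
    rw [hsj] at b
    refine le_antisymm (by linarith) ?_
    nlinarith
  ext k l
  rw [moveMat_apply]
  by_cases hk : σ i = k
  · subst hk
    by_cases hl : σ j = l
    · subst hl; simp [hfull, hne]
    · by_cases hl' : σ i = l
      · subst hl'; simp [hsi, hl]
      · simp only [if_true, hl, hl', if_false, sub_self]
        exact row_of_full H hne (by rw [hfull, hsi]; norm_num) (Ne.symm hl') (Ne.symm hl)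
  · rw [if_neg hk, hz i j hij k l (Ne.symm hk)]

lemma perm_conj (σ : Equiv.Perm (Fin n)) (A : Matrix (Fin n) (Fin n) ℝ) :
    σ.permMatrix ℝ * A * (σ.permMatrix ℝ)ᵀ = A.submatrix σ σ := by
  rw [Equiv.Perm.permMatrix, PEquiv.toMatrix_toPEquiv_mul]
  ext i j
  simp [Matrix.mul_apply, PEquiv.toMatrix_apply, Equiv.toPEquiv_apply, Equiv.symm_apply_eq]

lemma forward_three (H : SpecPres φ) (hn : 3 ≤ n) :
    ∃ P : Matrix (Fin n) (Fin n) ℝ, IsPerm P ∧ ∀ A, IsRS A → φ A = P * A * Pᵀ := by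
  obtain ⟨σ, hσ⟩ := exists_perm H hn
  refine ⟨_, ⟨σ.symm, rfl⟩, fun A hA => ?_⟩
  rw [perm_conj]
  conv_lhs => rw [rs_expand hA]
  conv_rhs => rw [rs_expand hA]
  simp only [map_add, map_sum, map_smul, map_one_eq H, map_move_eq H hσ]
  ext k l
  simp only [Matrix.add_apply, Matrix.sum_apply, Matrix.smul_apply, Matrix.submatrix_apply,
    moveMat_apply, Matrix.one_apply, Equiv.eq_symm_apply, Equiv.apply_symm_apply]

end aux

/-! ### The case `n = 2` -/

lemma rs_two_part (A : Matrix (Fin 2) (Fin 2) ℝ) (hA : IsRS A) (c : ℝ) :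
    partDS A + c • partR A =
      !![1 - ((A 0 1 + A 1 0) / 2 + c * (A 0 1 - A 1 0) / 2),
          (A 0 1 + A 1 0) / 2 + c * (A 0 1 - A 1 0) / 2;
        (A 0 1 + A 1 0) / 2 - c * (A 0 1 - A 1 0) / 2,
          1 - ((A 0 1 + A 1 0) / 2 - c * (A 0 1 - A 1 0) / 2)] := by
  have h0 := hA.2 0
  have h1 := hA.2 1
  simp only [Fin.sum_univ_two] at h0 h1
  have e0 : A 0 0 = 1 - A 0 1 := by linarith
  have e1 : A 1 1 = 1 - A 1 0 := by linarith
  ext i j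
  fin_cases i <;> fin_cases j <;>
    simp [partDS, partR, partC, rVec, cVec, sAvg, Matrix.vecMulVec_apply, e0, e1] <;> ring

/-- The image of `moveMat 0 1` has one free entry `q ∈ [0, 1]`; the image of `moveMat 1 0` is
then determined because the swap matrix has an image of zero diagonal. The constant is
`2 q - 1`. -/
lemma forward_two {φ : Matrix (Fin 2) (Fin 2) ℝ →ₗ[ℝ] Matrix (Fin 2) (Fin 2) ℝ}
    (H : SpecPres φ) : ∃ c : ℝ, c ∈ Set.Icc (-1 : ℝ) 1 ∧
      ∀ A, IsRS A → φ A = partDS A + c • partR A := by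
  have r00 := move_row H 0 1 0
  have r01 := move_row H 0 1 1
  have r10 := move_row H 1 0 0
  have r11 := move_row H 1 0 1
  have t0 := move_trace H (i := (0 : Fin 2)) (j := 1) (by decide)
  have t1 := move_trace H (i := (1 : Fin 2)) (j := 0) (by decide)
  have d0 := derangement_diag H (Equiv.swap (0 : Fin 2) 1) (by decide) 0
  have p0 := move_offdiag H 0 1 (k := 0) (l := 1) (by decide)
  have p1 := move_diag H 0 1 1
  simp only [Fin.sum_univ_two, Matrix.trace_fin_two, Equiv.swap_apply_left,
    Equiv.swap_apply_right] at r00 r01 r10 r11 t0 t1 d0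
  refine ⟨2 * φ (moveMat 0 1) 0 1 - 1, ⟨by linarith, by linarith⟩, fun A hA => ?_⟩
  rw [rs_two_part A hA]
  conv_lhs => rw [rs_expand hA]
  simp only [map_add, map_smul, map_one_eq H, Fin.sum_univ_two, moveMat_self]
  have a00 : φ (moveMat 0 1) 0 0 = -φ (moveMat 0 1) 0 1 := by linarith
  have a11 : φ (moveMat 0 1) 1 1 = φ (moveMat 0 1) 0 1 - 1 := by linarith
  have a10 : φ (moveMat 0 1) 1 0 = 1 - φ (moveMat 0 1) 0 1 := by linarith
  have b00 : φ (moveMat 1 0) 0 0 = φ (moveMat 0 1) 0 1 - 1 := by linarith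
  have b01 : φ (moveMat 1 0) 0 1 = 1 - φ (moveMat 0 1) 0 1 := by linarith
  have b11 : φ (moveMat 1 0) 1 1 = -φ (moveMat 0 1) 0 1 := by linarith
  have b10 : φ (moveMat 1 0) 1 0 = φ (moveMat 0 1) 0 1 := by linarith
  ext i j
  fin_cases i <;> fin_cases j <;>
    simp [a00, a10, a11, b00, b01, b10, b11] <;> ring

theorem stmt18 (n : ℕ) (hn : 2 ≤ n)
    (φ : Matrix (Fin n) (Fin n) ℝ →ₗ[ℝ] Matrix (Fin n) (Fin n) ℝ)
    (hφ : ∀ A, IsRS A → IsRS (φ A)) :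
    (∀ A, IsRS A → (φ A).charpoly = A.charpoly) ↔
    ((n = 2 ∧ ∃ c : ℝ, c ∈ Set.Icc (-1 : ℝ) 1 ∧
        ∀ A, IsRS A → φ A = partDS A + c • partR A) ∨
     (3 ≤ n ∧ ∃ P : Matrix (Fin n) (Fin n) ℝ, IsPerm P ∧
        ∀ A, IsRS A → φ A = P * A * Pᵀ)) := by
  constructor
  · intro hcp
    rcases Nat.lt_or_ge n 3 with h | h
    · obtain rfl : n = 2 := by omega
      exact Or.inl ⟨rfl, forward_two ⟨hφ, hcp⟩⟩
    · exact Or.inr ⟨h, forward_three ⟨hφ, hcp⟩ h⟩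
  · rintro (⟨rfl, c, -, hc⟩ | ⟨-, P, ⟨σ, rfl⟩, hP⟩) A hA
    · have h0 := hA.2 0
      have h1 := hA.2 1
      simp only [Fin.sum_univ_two] at h0 h1
      have e0 : A 0 0 = 1 - A 0 1 := by linarith
      have e1 : A 1 1 = 1 - A 1 0 := by linarith
      have ht : (φ A).trace = A.trace := by
        rw [hc A hA, rs_two_part A hA]
        simp [Matrix.trace_fin_two, e0, e1]; ring
      have hd : (φ A).det = A.det := by
        rw [hc A hA, rs_two_part A hA]
        simp [Matrix.det_fin_two, e0, e1]; ring
      rw [Matrix.charpoly_fin_two, Matrix.charpoly_fin_two, ht, hd]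
    · rw [hP A hA, perm_conj]
      exact Matrix.charpoly_reindex σ.symm A
end
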